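/- For every ε > 0 there exists K_ε > 0 such that for all convergents p_n/q_n of ∛2 with d_n = 2·q_n^3 − p_n^3 ≠ 0: max(p_n^3, 2·q_n^3) < K_ε · (|d_n| · p_n · q_n · 2)^{1+ε}. -/

import Mathlib

/-!
The theorem is a consequence of Roth's theorem. With `α = ∛2`, `n = 3` and `M = max p (α q)`, the
factorization of `αⁿqⁿ - pⁿ` gives `|d| ≥ |p - αq| Mⁿ⁻¹`, and Roth's theorem bounds `|p - αq|` from
below by a constant multiple of `q⁻¹⁻ᵟ`. When `p` and `αq` are comparable this yields
`|d| p q ≥ c Mⁿ⁻ᵟ`; otherwise `|p - αq|` has the order of `M` and the bound is immediate. The choice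
`δ = nε / (1 + ε)` makes `(n - δ)(1 + ε) = n`.

Roth's theorem is proved in the classical way for an algebraic integer `α`, to which the general
case reduces. Siegel's lemma yields an auxiliary integer polynomial in many variables that vanishes
to high order, measured by Roth's index, at `(α, …, α)`. At a point whose coordinates are very good
rational approximations to `α`, with rapidly varying denominators, the index is small by Roth's
lemma, so some Hasse derivative of low order is nonzero there; but its value is at once a rational
number with controlled denominator and, by Taylor expansion at `(α, …, α)`, too small for that.
Roth's lemma is an induction on the number of variables: a generalized Wronskian turns the
polynomial into a product of one in the first variable and one in the others.
-/

namespace Roth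

open MvPolynomial
open scoped Topology

section Translate

variable {σ R : Type*} [CommRing R]

/-- Translation of the origin to `β`: the polynomial `P (X + β)`. -/
noncomputable def translate (β : σ → R) : MvPolynomial σ R →ₐ[R] MvPolynomial σ R :=
  aeval fun i => X i + C (β i)

lemma eval_sub_translate (β x : σ → R) (P : MvPolynomial σ R) :
    eval (x - β) (translate β P) = eval x P := by
  have : (aeval (x - β)).comp (translate β) = (aeval x : MvPolynomial σ R →ₐ[R] R) := by
    ext1 i
    simp [translate]
  exact congr($this P)

end Translate

section HasseDerivative

variable {σ R : Type*} [Fintype σ] [CommRing R]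

/-- The multi-index binomial coefficient `∏ i, S i choose I i`. -/
def prodChoose (S I : σ →₀ ℕ) : ℕ := ∏ i, (S i).choose (I i)

lemma prodChoose_eq_zero {S I : σ →₀ ℕ} (h : ¬I ≤ S) : prodChoose S I = 0 := by
  obtain ⟨i, hi⟩ : ∃ i, S i < I i := by simpa [Finsupp.le_def] using h
  exact Finset.prod_eq_zero (Finset.mem_univ i) (Nat.choose_eq_zero_of_lt hi)

lemma prodChoose_zero_right (S : σ →₀ ℕ) : prodChoose S 0 = 1 := by simp [prodChoose]

lemma prodChoose_single (S : σ →₀ ℕ) (i : σ) : prodChoose S (Finsupp.single i 1) = S i := by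
  classical
  rw [prodChoose, Finset.prod_eq_single i] <;> simp +contextual [Finsupp.single_eq_of_ne]

lemma prodChoose_add_single (I : σ →₀ ℕ) (i : σ) :
    prodChoose (I + Finsupp.single i 1) I = I i + 1 := by
  classical
  rw [prodChoose, Finset.prod_eq_single i] <;> simp +contextual [Finsupp.single_eq_of_ne]

lemma prodChoose_mul_prodChoose (I J K : σ →₀ ℕ) :
    prodChoose (K + J) J * prodChoose (K + J + I) I =
      prodChoose (I + J) I * prodChoose (K + (J + I)) (J + I) := by
  simp only [prodChoose, ← Finset.prod_mul_distrib]
  refine Finset.prod_congr rfl fun i _ => ?_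
  have h := Nat.choose_mul (n := K i + (J i + I i)) (k := J i + I i) (s := I i) (by omega)
  simp only [Finsupp.add_apply, add_assoc, add_comm (I i) (J i)]
  rw [show K i + (J i + I i) - I i = K i + J i by omega,
    show J i + I i - I i = J i by omega] at h
  rw [mul_comm, ← h, mul_comm]

lemma prodChoose_le {S : σ →₀ ℕ} {r : σ → ℕ} (h : ∀ i, S i ≤ r i) (I : σ →₀ ℕ) :
    prodChoose S I ≤ 2 ^ ∑ i, r i := by
  rw [← Finset.prod_pow_eq_pow_sum]
  exact Finset.prod_le_prod' fun i _ =>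
    (Nat.choose_le_two_pow _ _).trans (Nat.pow_le_pow_right two_pos (h i))

/-- The Hasse derivative `∂^I / I!`, which makes sense without dividing by `I!`. -/
noncomputable def hasseDeriv (I : σ →₀ ℕ) : MvPolynomial σ R →ₗ[R] MvPolynomial σ R :=
  (basisMonomials σ R).constr R fun S => monomial (S - I) (prodChoose S I : R)

lemma hasseDeriv_monomial (I S : σ →₀ ℕ) (c : R) :
    hasseDeriv I (monomial S c) = monomial (S - I) (c * prodChoose S I) := by
  have h := (basisMonomials σ R).constr_basis R
    (fun S => monomial (S - I) (prodChoose S I : R)) S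
  rw [coe_basisMonomials] at h
  rw [← mul_one c, ← smul_eq_mul, ← smul_monomial, map_smul, hasseDeriv, h, smul_monomial]
  simp

lemma coeff_hasseDeriv (I J : σ →₀ ℕ) (P : MvPolynomial σ R) :
    coeff J (hasseDeriv I P) = prodChoose (J + I) I * coeff (J + I) P := by
  classical
  induction P using MvPolynomial.induction_on' with
  | add P Q hP hQ => simp only [map_add, coeff_add, hP, hQ, mul_add]
  | monomial S c =>
    rw [hasseDeriv_monomial, coeff_monomial, coeff_monomial]
    by_cases hI : I ≤ S
    · have : S - I = J ↔ S = J + I := tsub_eq_iff_eq_add_of_le hI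
      by_cases hS : S = J + I
      · simp [hS, mul_comm]
      · simp [this, hS]
    · have : S ≠ J + I := fun h => hI (h ▸ le_add_self)
      simp [prodChoose_eq_zero hI, this]

lemma hasseDeriv_zero (P : MvPolynomial σ R) : hasseDeriv 0 P = P := by
  ext J
  simp [coeff_hasseDeriv, prodChoose_zero_right]

lemma hasseDeriv_map {S : Type*} [CommRing S] (f : R →+* S) (I : σ →₀ ℕ)
    (P : MvPolynomial σ R) : hasseDeriv I (map f P) = map f (hasseDeriv I P) := by
  ext J
  simp [coeff_hasseDeriv, coeff_map]

lemma hasseDeriv_hasseDeriv (I J : σ →₀ ℕ) (P : MvPolynomial σ R) :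
    hasseDeriv J (hasseDeriv I P) = (prodChoose (I + J) I : R) • hasseDeriv (J + I) P := by
  ext K
  rw [coeff_smul, smul_eq_mul, coeff_hasseDeriv, coeff_hasseDeriv, coeff_hasseDeriv, ← mul_assoc,
    ← mul_assoc, ← Nat.cast_mul, ← Nat.cast_mul, prodChoose_mul_prodChoose, add_assoc]

lemma hasseDeriv_single_one (i : σ) (P : MvPolynomial σ R) :
    hasseDeriv (Finsupp.single i 1) P = pderiv i P := by
  induction P using MvPolynomial.induction_on' with
  | add P Q hP hQ => simp only [map_add, hP, hQ]
  | monomial S c => rw [pderiv_monomial, hasseDeriv_monomial, prodChoose_single]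

lemma pderiv_hasseDeriv (i : σ) (I : σ →₀ ℕ) (P : MvPolynomial σ R) :
    pderiv i (hasseDeriv I P) = ((I i + 1 : ℕ) : R) • hasseDeriv (I + Finsupp.single i 1) P := by
  rw [← hasseDeriv_single_one, hasseDeriv_hasseDeriv, prodChoose_add_single, add_comm I]

lemma degreeOf_hasseDeriv_le (i : σ) (I : σ →₀ ℕ) (P : MvPolynomial σ R) :
    degreeOf i (hasseDeriv I P) ≤ degreeOf i P := by
  refine degreeOf_le_iff.2 fun J hJ => ?_
  rw [mem_support_iff, coeff_hasseDeriv] at hJ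
  exact le_self_add.trans
    (monomial_le_degreeOf i (mem_support_iff.2 (right_ne_zero_of_mul hJ)) : (J + I) i ≤ _)

lemma translate_monomial (β : σ → R) (S : σ →₀ ℕ) (c : R) :
    translate β (monomial S c) = c • ∏ i, (X i + C (β i)) ^ S i := by
  rw [translate, aeval_monomial, Finsupp.prod_fintype _ _ (by simp), Algebra.smul_def]

lemma coeff_prod_aeval_X (f : σ → Polynomial R) (I : σ →₀ ℕ) :
    coeff I (∏ i, Polynomial.aeval (X i : MvPolynomial σ R) (f i)) = ∏ i, (f i).coeff (I i) := by
  classical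
  have expand (i : σ) : Polynomial.aeval (X i : MvPolynomial σ R) (f i) =
      ∑ k ∈ Finset.range (max (f i).natDegree (I i) + 1),
        monomial (Finsupp.single i k) ((f i).coeff k) := by
    rw [Polynomial.aeval_eq_sum_range' (Nat.lt_succ_of_le (le_max_left _ (I i)))]
    simp [X_pow_eq_monomial, smul_monomial]
  have collect (K : σ → ℕ) : ∏ i, monomial (Finsupp.single i (K i)) ((f i).coeff (K i)) =
      monomial (Finsupp.equivFunOnFinite.symm K) (∏ i, (f i).coeff (K i)) := by
    rw [← monomial_sum_prod, ← Finsupp.univ_sum_single (Finsupp.equivFunOnFinite.symm K)]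
    rfl
  simp_rw [expand, Finset.prod_univ_sum, collect, coeff_sum, coeff_monomial,
    Equiv.symm_apply_eq, Finset.sum_ite_eq']
  simp

lemma coeff_translate (β : σ → R) (I : σ →₀ ℕ) (P : MvPolynomial σ R) :
    coeff I (translate β P) = eval β (hasseDeriv I P) := by
  induction P using MvPolynomial.induction_on' with
  | add P Q hP hQ => rw [map_add, coeff_add, hP, hQ, map_add, map_add]
  | monomial S c =>
    have h := coeff_prod_aeval_X (fun i => (Polynomial.X + Polynomial.C (β i)) ^ S i) I
    simp only [map_pow, map_add, Polynomial.aeval_X, Polynomial.aeval_C, algebraMap_eq,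
      Polynomial.coeff_X_add_C_pow, Finset.prod_mul_distrib] at h
    rw [translate_monomial, coeff_smul, h, hasseDeriv_monomial, eval_monomial,
      Finsupp.prod_fintype _ _ (by simp), prodChoose, Nat.cast_prod, smul_eq_mul]
    simp only [Finsupp.tsub_apply]
    ring

lemma coeff_translate_hasseDeriv (β : σ → R) (I J : σ →₀ ℕ) (P : MvPolynomial σ R) :
    coeff J (translate β (hasseDeriv I P)) =
      prodChoose (I + J) I * coeff (J + I) (translate β P) := by
  simp [coeff_translate, hasseDeriv_hasseDeriv, smul_eval]

end HasseDerivative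

lemma degreeOf_translate_le {σ R : Type*} [Finite σ] [CommRing R] (i : σ) (β : σ → R)
    (P : MvPolynomial σ R) : degreeOf i (translate β P) ≤ degreeOf i P := by
  cases nonempty_fintype σ
  refine degreeOf_le_iff.2 fun I hI => ?_
  rw [mem_support_iff, coeff_translate] at hI
  obtain ⟨J, hJ⟩ := ne_zero_iff.1 fun h : hasseDeriv I P = 0 => hI (by rw [h, map_zero])
  rw [coeff_hasseDeriv] at hJ
  exact le_add_self.trans (monomial_le_degreeOf i (mem_support_iff.2 (right_ne_zero_of_mul hJ)))

section Length

variable {σ τ R : Type*} [SeminormedCommRing R]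

/-- The length of a polynomial: the sum of the norms of its coefficients. As a measure of size it is
submultiplicative, unlike the maximum of the norms. -/
noncomputable def length (P : MvPolynomial σ R) : ℝ := ∑ S ∈ P.support, ‖coeff S P‖

lemma length_eq_sum {P : MvPolynomial σ R} {s : Finset (σ →₀ ℕ)} (h : P.support ⊆ s) :
    length P = ∑ S ∈ s, ‖coeff S P‖ :=
  Finset.sum_subset h fun S _ hS => by simp [notMem_support_iff.1 hS]

lemma length_nonneg (P : MvPolynomial σ R) : 0 ≤ length P :=
  Finset.sum_nonneg fun _ _ => norm_nonneg _

lemma norm_coeff_le_length (S : σ →₀ ℕ) (P : MvPolynomial σ R) : ‖coeff S P‖ ≤ length P := by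
  classical
  rw [length_eq_sum (Finset.subset_insert S P.support)]
  exact Finset.single_le_sum (f := fun T => ‖coeff T P‖) (fun _ _ => norm_nonneg _)
    (Finset.mem_insert_self S _)

lemma length_neg (P : MvPolynomial σ R) : length (-P) = length P := by simp [length]

lemma length_add_le (P Q : MvPolynomial σ R) : length (P + Q) ≤ length P + length Q := by
  classical
  rw [length_eq_sum (support_add (p := P) (q := Q)),
    length_eq_sum (P := P) Finset.subset_union_left,
    length_eq_sum (P := Q) Finset.subset_union_right, ← Finset.sum_add_distrib]
  exact Finset.sum_le_sum fun S _ => by simpa using norm_add_le _ _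

lemma length_sum_le {ι : Type*} (s : Finset ι) (f : ι → MvPolynomial σ R) :
    length (∑ i ∈ s, f i) ≤ ∑ i ∈ s, length (f i) :=
  Finset.le_sum_of_subadditive _ (by simp [length]) length_add_le s f

lemma length_monomial (S : σ →₀ ℕ) (c : R) : length (monomial S c) = ‖c‖ := by
  classical
  simp [length_eq_sum support_monomial_subset, coeff_monomial]

lemma length_C (c : R) : length (C c : MvPolynomial σ R) = ‖c‖ := length_monomial 0 c

lemma length_mul_le (P Q : MvPolynomial σ R) : length (P * Q) ≤ length P * length Q := by
  have h : P * Q = ∑ S ∈ P.support, ∑ T ∈ Q.support, monomial (S + T) (coeff S P * coeff T Q) := by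
    conv_lhs => rw [P.as_sum, Q.as_sum, Finset.sum_mul_sum]
    simp only [monomial_mul]
  rw [h, length.eq_1 P, length.eq_1 Q, Finset.sum_mul_sum]
  refine (length_sum_le _ _).trans <| Finset.sum_le_sum fun S _ =>
    (length_sum_le _ _).trans <| Finset.sum_le_sum fun T _ => ?_
  rw [length_monomial]
  exact norm_mul_le _ _

lemma length_map_le_of_monomial (f : MvPolynomial σ R →+ MvPolynomial τ R)
    {P : MvPolynomial σ R} {B : ℝ}
    (h : ∀ S ∈ P.support, ∀ c, length (f (monomial S c)) ≤ B * ‖c‖) :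
    length (f P) ≤ B * length P := by
  conv_lhs => rw [P.as_sum, map_sum]
  rw [length.eq_1 P, Finset.mul_sum]
  exact (length_sum_le _ _).trans (Finset.sum_le_sum fun S hS => h S hS _)

variable [NormOneClass R]

lemma length_one : length (1 : MvPolynomial σ R) = 1 := by
  rw [← C_1, length_C, norm_one]

lemma length_X (i : σ) : length (X i : MvPolynomial σ R) = 1 :=
  (length_monomial _ 1).trans norm_one

lemma length_prod_le {ι : Type*} (s : Finset ι) (f : ι → MvPolynomial σ R) :
    length (∏ i ∈ s, f i) ≤ ∏ i ∈ s, length (f i) := by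
  classical
  induction s using Finset.induction_on with
  | empty => simp [length_one]
  | insert a s ha ih =>
    rw [Finset.prod_insert ha, Finset.prod_insert ha]
    exact (length_mul_le _ _).trans (mul_le_mul_of_nonneg_left ih (length_nonneg _))

lemma length_pow_le (P : MvPolynomial σ R) (k : ℕ) : length (P ^ k) ≤ length P ^ k := by
  simpa using length_prod_le (Finset.range k) fun _ => P

lemma length_det_le {k : ℕ} {M : Matrix (Fin k) (Fin k) (MvPolynomial σ R)} {B : ℝ}
    (hB : ∀ i j, length (M i j) ≤ B) : length M.det ≤ k.factorial * B ^ k := by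
  have term (s : Equiv.Perm (Fin k)) : length (s.sign • ∏ i, M (s i) i) ≤ B ^ k := by
    have unsigned : length (s.sign • ∏ i, M (s i) i) = length (∏ i, M (s i) i) := by
      rcases Int.units_eq_one_or s.sign with h | h <;> simp [h, length_neg]
    rw [unsigned]
    simpa using (length_prod_le Finset.univ _).trans
      (Finset.prod_le_prod (fun i _ => length_nonneg _) fun i _ => hB (s i) i)
  rw [Matrix.det_apply]
  refine (length_sum_le _ _).trans ((Finset.sum_le_card_nsmul _ _ _ fun s _ => term s).trans ?_)
  simp [Fintype.card_perm]

lemma length_hasseDeriv_le [Fintype σ] (I : σ →₀ ℕ) {P : MvPolynomial σ R} {r : σ → ℕ}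
    (h : ∀ i, degreeOf i P ≤ r i) : length (hasseDeriv I P) ≤ 2 ^ (∑ i, r i) * length P := by
  refine length_map_le_of_monomial (hasseDeriv I).toAddMonoidHom fun S hS c => ?_
  have hc : (prodChoose S I : ℝ) ≤ 2 ^ ∑ i, r i :=
    mod_cast prodChoose_le (fun i => (monomial_le_degreeOf i hS).trans (h i)) I
  rw [LinearMap.toAddMonoidHom_coe, hasseDeriv_monomial, length_monomial, mul_comm c]
  refine (norm_mul_le _ _).trans (mul_le_mul_of_nonneg_right ?_ (norm_nonneg c))
  exact (Nat.norm_cast_le _).trans (by simpa using hc)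

lemma length_translate_le [Fintype σ] {β : σ → R} {b : ℝ} (hβ : ∀ i, ‖β i‖ ≤ b)
    {P : MvPolynomial σ R} {r : σ → ℕ} (h : ∀ i, degreeOf i P ≤ r i) :
    length (translate β P) ≤ (1 + b) ^ (∑ i, r i) * length P := by
  refine length_map_le_of_monomial (translate β).toAddMonoidHom fun S hS c => ?_
  have linear (i : σ) : length (X i + C (β i)) ≤ 1 + b := by
    grw [length_add_le, length_X, length_C, hβ i]
  have factor (i : σ) : length ((X i + C (β i)) ^ S i) ≤ (1 + b) ^ r i := by
    have hb : 0 ≤ b := (norm_nonneg _).trans (hβ i)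
    calc length ((X i + C (β i)) ^ S i)
      _ ≤ (1 + b) ^ S i :=
          (length_pow_le _ _).trans (pow_le_pow_left₀ (length_nonneg _) (linear i) _)
      _ ≤ (1 + b) ^ r i :=
          pow_le_pow_right₀ (by linarith) ((monomial_le_degreeOf i hS).trans (h i))
  change length (translate β (monomial S c)) ≤ _
  rw [translate_monomial, smul_eq_C_mul, mul_comm, ← Finset.prod_pow_eq_pow_sum]
  refine (length_mul_le _ _).trans ?_
  rw [length_C]
  gcongr
  exact (length_prod_le _ _).trans
    (Finset.prod_le_prod (fun i _ => length_nonneg _) fun i _ => factor i)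

end Length

lemma length_map_intCast {σ : Type*} (P : MvPolynomial σ ℤ) :
    length (map (Int.castRingHom ℝ) P) = length P := by
  rw [length, length, support_map_of_injective _ Int.cast_injective]
  simp [coeff_map, Int.norm_eq_abs]

section Index

variable {σ R : Type*} [CommRing R]

/-- `IndexGE w β P θ` says that every monomial in the Taylor expansion of `P` at `β` has
`w`-weight at least `θ`; with `w h = 1 / r h` this is Roth's condition that the index of `P` at
`β` with respect to `r` is at least `θ`. -/
def IndexGE (w : σ → ℝ) (β : σ → R) (P : MvPolynomial σ R) (θ : ℝ) : Prop :=
  ∀ I, coeff I (translate β P) ≠ 0 → θ ≤ Finsupp.weight w I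

variable {w : σ → ℝ} {β : σ → R}

lemma weight_nonneg (hw : ∀ i, 0 ≤ w i) (I : σ →₀ ℕ) : 0 ≤ Finsupp.weight w I := by
  rw [Finsupp.weight_apply]
  exact Finset.sum_nonneg fun i _ => nsmul_nonneg (hw i) _

lemma IndexGE.mono {P : MvPolynomial σ R} {θ η : ℝ} (h : IndexGE w β P θ) (hη : η ≤ θ) :
    IndexGE w β P η := fun I hI => hη.trans (h I hI)

lemma IndexGE.mul {P Q : MvPolynomial σ R} {θ η : ℝ} (hP : IndexGE w β P θ)
    (hQ : IndexGE w β Q η) : IndexGE w β (P * Q) (θ + η) := by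
  classical
  intro I hI
  rw [map_mul, coeff_mul] at hI
  obtain ⟨⟨J, K⟩, hJK, hne⟩ := Finset.exists_ne_zero_of_sum_ne_zero hI
  rw [← Finset.HasAntidiagonal.mem_antidiagonal.1 hJK, map_add]
  exact add_le_add (hP J (left_ne_zero_of_mul hne)) (hQ K (right_ne_zero_of_mul hne))

lemma IndexGE.prod {ι : Type*} {s : Finset ι} {P : ι → MvPolynomial σ R} {θ : ι → ℝ}
    (h : ∀ i ∈ s, IndexGE w β (P i) (θ i)) : IndexGE w β (∏ i ∈ s, P i) (∑ i ∈ s, θ i) := by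
  classical
  induction s using Finset.induction_on with
  | empty =>
    intro I hI
    have : I = 0 := by
      by_contra hne
      simp [coeff_one, Ne.symm hne] at hI
    simp [this]
  | insert i s hi ih =>
    rw [Finset.prod_insert hi, Finset.sum_insert hi]
    exact (h i (by simp)).mul (ih fun j hj => h j (by simp [hj]))

lemma IndexGE.sum {ι : Type*} {s : Finset ι} {P : ι → MvPolynomial σ R} {θ : ℝ}
    (h : ∀ i ∈ s, IndexGE w β (P i) θ) : IndexGE w β (∑ i ∈ s, P i) θ := by
  intro I hI
  rw [map_sum, coeff_sum] at hI
  obtain ⟨i, hi, hne⟩ := Finset.exists_ne_zero_of_sum_ne_zero hI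
  exact h i hi I hne

lemma IndexGE.det {k : ℕ} {M : Matrix (Fin k) (Fin k) (MvPolynomial σ R)} {θ : Fin k → ℝ}
    (h : ∀ i j, IndexGE w β (M i j) (θ j)) : IndexGE w β M.det (∑ j, θ j) := by
  rw [Matrix.det_apply]
  refine IndexGE.sum fun s _ I hI => IndexGE.prod (s := Finset.univ) (fun i _ => h (s i) i) I ?_
  contrapose! hI
  rcases Int.units_eq_one_or s.sign with hs | hs <;> simp [hs, hI, -map_prod]

lemma IndexGE.hasseDeriv [Fintype σ] {P : MvPolynomial σ R} {θ : ℝ} (h : IndexGE w β P θ)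
    (I : σ →₀ ℕ) : IndexGE w β (hasseDeriv I P) (θ - Finsupp.weight w I) := by
  intro J hJ
  rw [coeff_translate_hasseDeriv] at hJ
  have := h _ (right_ne_zero_of_mul hJ)
  rw [map_add] at this
  linarith

end Index

section Wronskian

lemma exists_submatrix_det_ne_zero_of_field {F Λ : Type*} [Field F] {k : ℕ}
    {M : Matrix Λ (Fin k) F} (hM : LinearIndependent F M.col) :
    ∃ f : Fin k → Λ, (M.submatrix f id).det ≠ 0 := by
  have htop : Submodule.span F (Set.range M.row) = ⊤ := by
    by_contra hne
    obtain ⟨g, hg, hker⟩ := Submodule.exists_le_ker_of_lt_top _ (lt_top_iff_ne_top.2 hne)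
    obtain ⟨c, rfl⟩ := (dotProductEquiv F (Fin k)).surjective g
    have hc : ∑ i, c i • M.col i = 0 := by
      ext l
      simpa [dotProduct] using hker (Submodule.subset_span ⟨l, rfl⟩)
    exact hg (by rw [funext (Fintype.linearIndependent_iff.1 hM c hc)]; exact map_zero _)
  obtain ⟨v, hv, -, hli⟩ := Submodule.exists_fun_fin_finrank_span_eq F (Set.range M.row)
  have hk : Module.finrank F (Submodule.span F (Set.range M.row)) = k := by
    rw [htop, finrank_top, Module.finrank_fin_fun]
  choose e he using hv
  refine ⟨e ∘ finCongr hk.symm, ?_⟩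
  have hrows : LinearIndependent F (M.submatrix (e ∘ finCongr hk.symm) id) := by
    have : M.submatrix (e ∘ finCongr hk.symm) id = v ∘ finCongr hk.symm :=
      _root_.funext fun i => he _
    exact this ▸ hli.comp _ (finCongr hk.symm).injective
  exact ((Matrix.isUnit_iff_isUnit_det _).1
    (Matrix.linearIndependent_rows_iff_isUnit.1 hrows)).ne_zero

lemma exists_submatrix_det_ne_zero {R Λ : Type*} [CommRing R] [IsDomain R] {k : ℕ}
    {M : Matrix Λ (Fin k) R} (hM : LinearIndependent R M.col) :
    ∃ f : Fin k → Λ, (M.submatrix f id).det ≠ 0 := by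
  let F := FractionRing R
  let toF : (Λ → R) →ₗ[R] (Λ → F) := (Algebra.linearMap R F).compLeft Λ
  have hinj : Function.Injective toF := (IsFractionRing.injective R F).comp_left
  have hF : LinearIndependent F (M.map (algebraMap R F)).col :=
    (LinearIndependent.iff_fractionRing R F).1 (hM.map_injOn toF hinj.injOn)
  obtain ⟨f, hf⟩ := exists_submatrix_det_ne_zero_of_field hF
  refine ⟨f, fun h0 => hf ?_⟩
  rw [Matrix.submatrix_map, ← RingHom.mapMatrix_apply, ← RingHom.map_det, h0, map_zero]

/-- A system of differential operators `op l` of order `order l` on a `K`-algebra `R`, built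
from derivations `D h` whose only common constants, on ratios of elements of `R`, are the scalars.
This is what the (generalized) Wronskian criterion needs. -/
structure DerivativeSystem (K R H Λ : Type*) [Field K] [CommRing R] [Algebra K R] where
  D : H → Derivation K R R
  op : Λ → R → R
  order : Λ → ℕ
  id : Λ
  order_id : order id = 0
  op_id (f : R) : op id f = f
  derive (h : H) (l : Λ) : ∃ l' u, order l' ≤ order l + 1 ∧ ∀ f, D h (op l f) = u * op l' f
  const {f g : R} : f ≠ 0 → (∀ h, f * D h g = g * D h f) → ∃ a : K, g = a • f

namespace DerivativeSystem

variable {K R H Λ ι : Type*} [Field K] [CommRing R] [Algebra K R]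

/-- Applying `D h` to `∑ c i * op l (φ i) = 0` and eliminating `c i₀` gives a relation of the same
kind, of order one less, with coefficients `c i₀ * D h (c i) - c i * D h (c i₀)`. -/
lemma sum_cross_mul_op_eq_zero (S : DerivativeSystem K R H Λ) {φ c : ι → R} {s : Finset ι} {k : ℕ}
    (hc : ∀ l, S.order l < k + 1 → ∑ i ∈ s, c i * S.op l (φ i) = 0) (i₀ : ι) (h : H) {l : Λ}
    (hl : S.order l < k) :
    ∑ i ∈ s, (c i₀ * S.D h (c i) - c i * S.D h (c i₀)) * S.op l (φ i) = 0 := by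
  obtain ⟨l', u, hl', hu⟩ := S.derive h l
  have hsum := hc l (by omega)
  have hderiv : ∑ i ∈ s, S.D h (c i) * S.op l (φ i) = 0 := by
    have := congrArg (S.D h) hsum
    simp only [map_sum, map_zero, Derivation.leibniz, smul_eq_mul, hu,
      Finset.sum_add_distrib] at this
    have hzero : ∑ i ∈ s, c i * (u * S.op l' (φ i)) = 0 := by
      simp_rw [mul_left_comm _ u, ← Finset.mul_sum, hc l' (by omega), mul_zero]
    simpa [hzero, mul_comm] using this
  calc ∑ i ∈ s, (c i₀ * S.D h (c i) - c i * S.D h (c i₀)) * S.op l (φ i)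
    _ = c i₀ * ∑ i ∈ s, S.D h (c i) * S.op l (φ i) -
          S.D h (c i₀) * ∑ i ∈ s, c i * S.op l (φ i) := by
        rw [Finset.mul_sum, Finset.mul_sum, ← Finset.sum_sub_distrib]
        exact Finset.sum_congr rfl fun i _ => by ring
    _ = 0 := by rw [hderiv, hsum, mul_zero, mul_zero, sub_zero]

lemma eq_zero_of_sum_mul_op_eq_zero [IsDomain R] (S : DerivativeSystem K R H Λ) {φ c : ι → R}
    {s : Finset ι} (hφ : LinearIndepOn K φ (s : Set ι))
    (hc : ∀ l, S.order l < s.card → ∑ i ∈ s, c i * S.op l (φ i) = 0) : ∀ i ∈ s, c i = 0 := by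
  classical
  induction hk : s.card generalizing s c with
  | zero => simp [Finset.card_eq_zero.1 hk]
  | succ k ih =>
    by_contra! hne
    obtain ⟨i₀, hi₀, hc₀⟩ := hne
    have hcard : (s.erase i₀).card = k := by rw [Finset.card_erase_of_mem hi₀]; omega
    have cross (i : ι) (hi : i ∈ s) (h : H) : c i₀ * S.D h (c i) - c i * S.D h (c i₀) = 0 := by
      rcases eq_or_ne i i₀ with rfl | hii
      · ring
      refine ih (c := fun i => c i₀ * S.D h (c i) - c i * S.D h (c i₀)) (s := s.erase i₀)
        (hφ.mono (by simp)) (fun l hl => ?_) hcard i (Finset.mem_erase.2 ⟨hii, hi⟩)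
      have := S.sum_cross_mul_op_eq_zero (k := k) (fun l hl => hc l (by omega)) i₀ h (hcard ▸ hl)
      simpa [← Finset.add_sum_erase s _ hi₀] using this
    have proportional (i : ι) : ∃ a : K, i ∈ s → c i = a • c i₀ := by
      by_cases hi : i ∈ s
      · obtain ⟨a, ha⟩ := S.const hc₀ fun h => sub_eq_zero.1 (cross i hi h)
        exact ⟨a, fun _ => ha⟩
      · exact ⟨0, fun h => absurd h hi⟩
    choose a ha using proportional
    have hzero := hc S.id (by rw [S.order_id]; omega)
    have : c i₀ * ∑ i ∈ s, a i • φ i = 0 := by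
      rw [← hzero, Finset.mul_sum]
      refine Finset.sum_congr rfl fun i hi => ?_
      rw [S.op_id, ha i hi, mul_smul_comm, smul_mul_assoc]
    have ha₀ := linearIndepOn_finset_iff.1 hφ a ((mul_eq_zero.1 this).resolve_left hc₀) i₀ hi₀
    exact hc₀ (by rw [ha i₀ hi₀, ha₀, zero_smul])

theorem exists_det_ne_zero [IsDomain R] (S : DerivativeSystem K R H Λ) {k : ℕ} {φ : Fin k → R}
    (hφ : LinearIndependent K φ) :
    ∃ l : Fin k → Λ, (∀ i, S.order (l i) < k) ∧
      (Matrix.of fun i j => S.op (l i) (φ j)).det ≠ 0 := by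
  let M : Matrix {l : Λ // S.order l < k} (Fin k) R := .of fun l j => S.op l (φ j)
  have hM : LinearIndependent R M.col := by
    refine Fintype.linearIndependent_iff.2 fun c hc i => ?_
    refine S.eq_zero_of_sum_mul_op_eq_zero (s := Finset.univ) (by simpa using hφ)
      (fun l hl => ?_) i (Finset.mem_univ i)
    simpa [M] using congrFun hc ⟨l, by simpa using hl⟩
  obtain ⟨f, hf⟩ := exists_submatrix_det_ne_zero hM
  exact ⟨fun i => f i, fun i => (f i).2, hf⟩

end DerivativeSystem

variable {σ K : Type*} [Field K]

lemma coeff_X_mul_pderiv {R : Type*} [CommSemiring R] (i : σ) (P : MvPolynomial σ R) (S : σ →₀ ℕ) :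
    coeff S (X i * pderiv i P) = S i * coeff S P := by
  classical
  induction P using MvPolynomial.induction_on' with
  | add P Q hP hQ => rw [map_add, mul_add, coeff_add, hP, hQ, coeff_add, mul_add]
  | monomial T c =>
    rw [X_mul_pderiv_monomial, coeff_smul, coeff_monomial, nsmul_eq_mul]
    split_ifs with h <;> simp [h]

lemma coeff_mul_X_mul_pderiv (m : MonomialOrder σ) (i : σ) (P Q : MvPolynomial σ K) :
    coeff (m.degree P + m.degree Q) (P * (X i * pderiv i Q)) =
      m.leadingCoeff P * (m.degree Q i * m.leadingCoeff Q) := by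
  rw [MonomialOrder.coeff_mul_of_add_of_degree_le le_rfl, coeff_X_mul_pderiv]
  · rfl
  · refine m.degree_le_iff.2 fun S hS => m.le_degree ?_
    rw [mem_support_iff, coeff_X_mul_pderiv] at hS
    exact mem_support_iff.2 (right_ne_zero_of_mul hS)

variable [CharZero K]

lemma degree_eq_of_mul_pderiv_eq (m : MonomialOrder σ) {f g : MvPolynomial σ K} (hf : f ≠ 0)
    (hg : g ≠ 0) (h : ∀ i, f * pderiv i g = g * pderiv i f) : m.degree g = m.degree f := by
  ext i
  have hX : f * (X i * pderiv i g) = g * (X i * pderiv i f) := by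
    rw [mul_left_comm, h i, mul_left_comm]
  have hcoeff := coeff_mul_X_mul_pderiv m i f g
  rw [hX, add_comm, coeff_mul_X_mul_pderiv m i g f] at hcoeff
  have hne : m.leadingCoeff f * m.leadingCoeff g ≠ 0 :=
    mul_ne_zero (m.leadingCoeff_ne_zero_iff.2 hf) (m.leadingCoeff_ne_zero_iff.2 hg)
  exact_mod_cast (mul_left_cancel₀ hne (by linear_combination hcoeff) :
    (m.degree f i : K) = m.degree g i).symm

lemma exists_eq_smul_of_mul_pderiv_eq (m : MonomialOrder σ) {f g : MvPolynomial σ K} (hf : f ≠ 0)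
    (h : ∀ i, f * pderiv i g = g * pderiv i f) : ∃ a : K, g = a • f := by
  by_contra! hne
  set a := coeff (m.degree f) g / m.leadingCoeff f with ha
  have hsub : g - a • f ≠ 0 := sub_ne_zero.2 (hne a)
  have hdeg : m.degree (g - a • f) = m.degree f := by
    refine degree_eq_of_mul_pderiv_eq m hf hsub fun i => ?_
    rw [map_sub, Derivation.map_smul, mul_sub, sub_mul, h i, mul_smul_comm, smul_mul_assoc]
  refine m.leadingCoeff_ne_zero_iff.2 hsub ?_
  rw [MonomialOrder.leadingCoeff, hdeg, coeff_sub, coeff_smul, smul_eq_mul, ha]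
  exact sub_eq_zero.2 (div_mul_cancel₀ _ (m.leadingCoeff_ne_zero_iff.2 hf)).symm

lemma exists_eq_smul_of_mul_derivative_eq {f g : Polynomial K} (hf : f ≠ 0)
    (h : f * g.derivative = g * f.derivative) : ∃ a : K, g = a • f := by
  classical
  let := EuclideanDomain.gcdMonoid (Polynomial K)
  obtain ⟨d, u, v, hcoprime, rfl, rfl⟩ :
      ∃ d u v : Polynomial K, IsCoprime u v ∧ f = d * u ∧ g = d * v :=
    have hd := gcd_ne_zero_of_right hf
    ⟨gcd g f, f / gcd g f, g / gcd g f, (isCoprime_div_gcd_div_gcd hf).symm,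
      (EuclideanDomain.mul_div_cancel' hd (gcd_dvd_right g f)).symm,
      (EuclideanDomain.mul_div_cancel' hd (gcd_dvd_left g f)).symm⟩
  obtain ⟨hd, hu⟩ := mul_ne_zero_iff.1 hf
  have hW : u.wronskian v = 0 := by
    refine mul_left_cancel₀ (pow_ne_zero 2 hd) ?_
    simp only [Polynomial.derivative_mul] at h
    rw [Polynomial.wronskian]
    linear_combination h
  obtain ⟨hu', hv'⟩ := hcoprime.wronskian_eq_zero_iff.1 hW
  obtain ⟨a, rfl⟩ := Polynomial.natDegree_eq_zero.1 (Polynomial.derivative_eq_zero.1 hu')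
  obtain ⟨b, rfl⟩ := Polynomial.natDegree_eq_zero.1 (Polynomial.derivative_eq_zero.1 hv')
  refine ⟨b / a, ?_⟩
  rw [Polynomial.smul_eq_C_mul, mul_left_comm, ← Polynomial.C_mul,
    div_mul_cancel₀ _ (by simpa using hu)]

/-- The multivariate Hasse derivatives, as generated by the partial derivatives. -/
noncomputable def hasseSystem (m : MonomialOrder σ) [Fintype σ] :
    DerivativeSystem K (MvPolynomial σ K) σ (σ →₀ ℕ) where
  D i := pderiv i
  op I P := hasseDeriv I P
  order := Finsupp.degree
  id := 0
  order_id := by simp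
  op_id := hasseDeriv_zero
  derive i I := by
    refine ⟨I + Finsupp.single i 1, C ((I i + 1 : ℕ) : K), by simp, fun P => ?_⟩
    rw [pderiv_hasseDeriv, smul_eq_C_mul]
  const := exists_eq_smul_of_mul_pderiv_eq m

variable (K) in
/-- The univariate Hasse derivatives, as generated by the usual derivative. -/
noncomputable def polynomialHasseSystem : DerivativeSystem K (Polynomial K) Unit ℕ where
  D _ := Polynomial.derivative'
  op j f := Polynomial.hasseDeriv j f
  order := id
  id := 0
  order_id := rfl
  op_id := Polynomial.hasseDeriv_zero'
  derive _ j := by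
    refine ⟨j + 1, ((j + 1 : ℕ) : Polynomial K), le_rfl, fun f => ?_⟩
    have := LinearMap.congr_fun (Polynomial.hasseDeriv_comp (R := K) 1 j) f
    simpa [add_comm 1 j, add_mul] using this
  const hf h := exists_eq_smul_of_mul_derivative_eq hf (h ())

theorem exists_det_hasseDeriv_ne_zero [LinearOrder σ] [Fintype σ] {k : ℕ}
    {φ : Fin k → MvPolynomial σ K} (hφ : LinearIndependent K φ) :
    ∃ I : Fin k → σ →₀ ℕ, (∀ i, (I i).degree < k) ∧
      (Matrix.of fun i j => hasseDeriv (I i) (φ j)).det ≠ 0 :=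
  (hasseSystem MonomialOrder.lex).exists_det_ne_zero hφ

theorem det_polynomial_hasseDeriv_ne_zero {k : ℕ} {ψ : Fin k → Polynomial K}
    (hψ : LinearIndependent K ψ) :
    (Matrix.of fun i j : Fin k => Polynomial.hasseDeriv i (ψ j)).det ≠ 0 := by
  intro h0
  obtain ⟨c, hc, hsum⟩ := Matrix.exists_mulVec_eq_zero_iff.2 h0
  refine hc (funext fun i => (polynomialHasseSystem K).eq_zero_of_sum_mul_op_eq_zero
    (s := Finset.univ) (φ := ψ) (c := c) (by simpa using hψ) (fun l hl => ?_) i (Finset.mem_univ i))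
  simpa [Matrix.mulVec, dotProduct, mul_comm, polynomialHasseSystem] using
    congrFun hsum ⟨l, by simpa [polynomialHasseSystem] using hl⟩

end Wronskian

section RankFactorization

lemma exists_rank_factorization {K V ι : Type*} [Field K] [AddCommGroup V] [Module K V] [Fintype ι]
    (g : ι → V) : ∃ k ≤ Fintype.card ι, ∃ (φ : Fin k → V) (c : Fin k → ι → K),
      LinearIndependent K φ ∧ LinearIndependent K c ∧ ∀ j, g j = ∑ l, c l j • φ l := by
  let W := Submodule.span K (Set.range g)
  let gW (j : ι) : W := ⟨g j, Submodule.subset_span ⟨j, rfl⟩⟩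
  have hspan : Submodule.span K (Set.range gW) = ⊤ :=
    (Submodule.span_range_subtype_eq_top_iff W _).2 rfl
  have : Module.Finite K W := Module.Finite.span_of_finite K (Set.finite_range g)
  let b := Module.finBasis K W
  refine ⟨Module.finrank K W, finrank_range_le_card g, fun l => b l, fun l j => b.repr (gW j) l,
    b.linearIndependent.map' W.subtype W.ker_subtype, ?_, fun j => ?_⟩
  · refine Fintype.linearIndependent_iff.2 fun a ha l => ?_
    have hzero : ∑ l, a l • b.coord l = 0 :=
      LinearMap.ext_on_range hspan fun j => by simpa using congrFun ha j
    simpa [Finsupp.single_apply] using congr($hzero (b l))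
  · calc g j = (∑ l, b.repr (gW j) l • b l : W) := by rw [b.sum_repr]
      _ = ∑ l, b.repr (gW j) l • (b l : V) := by push_cast; rfl

end RankFactorization

section Tensor

variable {n : ℕ} {R : Type*} [CommRing R]

/-- The product `φ(X₁, …, Xₙ) ψ(X₀)` of polynomials in separate variables. -/
noncomputable def tensor (φ : MvPolynomial (Fin n) R) (ψ : Polynomial R) :
    MvPolynomial (Fin (n + 1)) R :=
  rename Fin.succ φ * Polynomial.aeval (X 0) ψ

lemma finSuccEquiv_tensor (φ : MvPolynomial (Fin n) R) (ψ : Polynomial R) :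
    finSuccEquiv R n (tensor φ ψ) = Polynomial.C φ * ψ.map C := by
  have h₁ : finSuccEquiv R n (rename Fin.succ φ) = Polynomial.C φ := by
    induction φ using MvPolynomial.induction_on with
    | C a => simp [finSuccEquiv_apply]
    | add p q hp hq => simp [hp, hq]
    | mul_X p i hp => simp [hp, finSuccEquiv_X_succ]
  have h₂ : finSuccEquiv R n (Polynomial.aeval (X 0) ψ) = ψ.map C := by
    rw [← Polynomial.aeval_algHom_apply, finSuccEquiv_X_zero, Polynomial.aeval_X_left_eq_map]
    rfl
  rw [tensor, map_mul, h₁, h₂]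

lemma coeff_tensor (φ : MvPolynomial (Fin n) R) (ψ : Polynomial R) (j : ℕ) (J : Fin n →₀ ℕ) :
    coeff (J.cons j) (tensor φ ψ) = coeff J φ * ψ.coeff j := by
  rw [← finSuccEquiv_coeff_coeff, finSuccEquiv_tensor, Polynomial.coeff_C_mul,
    Polynomial.coeff_map, mul_comm, coeff_C_mul, mul_comm]

lemma eval_tensor (φ : MvPolynomial (Fin n) R) (ψ : Polynomial R) (β : Fin (n + 1) → R) :
    eval β (tensor φ ψ) = eval (Fin.tail β) φ * ψ.eval (β 0) := by
  have : eval β (Polynomial.aeval (X 0) ψ) = ψ.eval (β 0) := by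
    rw [← coe_aeval_eq_eval, RingHom.coe_coe, ← Polynomial.aeval_algHom_apply, aeval_X,
      Polynomial.coe_aeval_eq_eval]
  rw [tensor, map_mul, eval_rename, this]
  rfl

lemma ext_coeff_cons {P Q : MvPolynomial (Fin (n + 1)) R}
    (h : ∀ j J, coeff (Finsupp.cons j J) P = coeff (Finsupp.cons j J) Q) : P = Q := by
  ext I
  rw [← I.cons_tail]
  exact h _ _

lemma cons_add_cons (i j : ℕ) (I J : Fin n →₀ ℕ) : I.cons i + J.cons j = (I + J).cons (i + j) := by
  ext h
  cases h using Fin.cases <;> simp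

lemma prodChoose_cons (i j : ℕ) (I J : Fin n →₀ ℕ) :
    prodChoose (I.cons i) (J.cons j) = i.choose j * prodChoose I J := by
  simp [prodChoose, Fin.prod_univ_succ]

lemma hasseDeriv_tensor (φ : MvPolynomial (Fin n) R) (ψ : Polynomial R) (j : ℕ)
    (J : Fin n →₀ ℕ) :
    hasseDeriv (J.cons j) (tensor φ ψ) = tensor (hasseDeriv J φ) (Polynomial.hasseDeriv j ψ) := by
  refine ext_coeff_cons fun i I => ?_
  rw [coeff_hasseDeriv, coeff_tensor, cons_add_cons, coeff_tensor, coeff_hasseDeriv,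
    Polynomial.hasseDeriv_coeff, prodChoose_cons, Nat.cast_mul]
  ring

lemma coeff_translate_tensor (φ : MvPolynomial (Fin n) R) (ψ : Polynomial R)
    (β : Fin (n + 1) → R) (j : ℕ) (J : Fin n →₀ ℕ) :
    coeff (J.cons j) (translate β (tensor φ ψ)) =
      coeff J (translate (Fin.tail β) φ) * (Polynomial.taylor (β 0) ψ).coeff j := by
  rw [coeff_translate, hasseDeriv_tensor, eval_tensor, coeff_translate, Polynomial.taylor_coeff]

lemma det_hasseDeriv_sum_tensor {k : ℕ} (φ : Fin k → MvPolynomial (Fin n) R)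
    (ψ : Fin k → Polynomial R) (I : Fin k → Fin n →₀ ℕ) :
    (Matrix.of fun i j : Fin k => hasseDeriv ((I i).cons j) (∑ l, tensor (φ l) (ψ l))).det =
      tensor (Matrix.of fun i l => hasseDeriv (I i) (φ l)).det
        (Matrix.of fun j l : Fin k => Polynomial.hasseDeriv j (ψ l)).det := by
  rw [tensor, AlgHom.map_det, AlgHom.map_det,
    ← Matrix.det_transpose ((Polynomial.aeval (X 0)).mapMatrix _), ← Matrix.det_mul]
  congr 1
  ext1 i j
  rw [Matrix.of_apply, Matrix.mul_apply, map_sum]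
  exact Finset.sum_congr rfl fun l _ => hasseDeriv_tensor (φ l) (ψ l) j (I i)

lemma exists_eq_sum_tensor {K : Type*} [Field K] (P : MvPolynomial (Fin (n + 1)) K) :
    ∃ k ≤ degreeOf 0 P + 1, ∃ (φ : Fin k → MvPolynomial (Fin n) K) (ψ : Fin k → Polynomial K),
      LinearIndependent K φ ∧ LinearIndependent K ψ ∧ P = ∑ l, tensor (φ l) (ψ l) := by
  classical
  obtain ⟨k, hk, φ, c, hφ, hc, hg⟩ := exists_rank_factorization (K := K)
    fun j : Fin (degreeOf 0 P + 1) => (finSuccEquiv K n P).coeff j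
  have ofFn_injective : Function.Injective (Polynomial.ofFn (R := K) (degreeOf 0 P + 1)) :=
    Polynomial.injective_ofFn _
  refine ⟨k, by simpa using hk, φ, fun l => Polynomial.ofFn _ (c l), hφ,
    hc.map' _ (LinearMap.ker_eq_bot.2 ofFn_injective), ext_coeff_cons fun j J => ?_⟩
  simp_rw [coeff_sum, coeff_tensor]
  rcases lt_or_ge j (degreeOf 0 P + 1) with hj | hj
  · have := congr(coeff J $(hg ⟨j, hj⟩))
    simpa [finSuccEquiv_coeff_coeff, coeff_sum, Polynomial.ofFn_coeff_eq_val_of_lt _ hj, mul_comm]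
      using this
  · have hP : coeff (Finsupp.cons j J) P = 0 :=
      notMem_support_iff.1 (notMem_support_of_degreeOf_lt 0 (by simpa using hj))
    simp [hP, Polynomial.ofFn_coeff_eq_zero_of_ge _ hj]

end Tensor

section RationalRoot

lemma isPrimitive_den_mul_X_sub_num (x : ℚ) :
    (Polynomial.C (x.den : ℤ) * Polynomial.X - Polynomial.C x.num).IsPrimitive := by
  intro a ha
  rw [Polynomial.C_dvd_iff_dvd_coeff] at ha
  have hnum : a ∣ x.num := by simpa using ha 0
  have hden : a ∣ (x.den : ℤ) := by simpa [-eq_intCast, Polynomial.coeff_C] using ha 1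
  exact x.isCoprime_num_den.isUnit_of_dvd' hnum hden

lemma den_pow_rootMultiplicity_dvd_leadingCoeff (U : Polynomial ℤ) (x : ℚ) :
    (x.den : ℤ) ^ (U.map (Int.castRingHom ℚ)).rootMultiplicity x ∣ U.leadingCoeff := by
  set l := (U.map (Int.castRingHom ℚ)).rootMultiplicity x
  let B : Polynomial ℤ := Polynomial.C (x.den : ℤ) * Polynomial.X - Polynomial.C x.num
  have primitive : (B ^ l).IsPrimitive := by
    induction l with
    | zero => exact Polynomial.isPrimitive_one
    | succ l ih => exact pow_succ B l ▸ ih.mul (isPrimitive_den_mul_X_sub_num x)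
  have map_B : B.map (Int.castRingHom ℚ) =
      Polynomial.C (x.den : ℚ) * (Polynomial.X - Polynomial.C x) := by
    rw [mul_sub, ← Polynomial.C_mul, Rat.den_mul_eq_num]
    simp [B]
  have dvd : B ^ l ∣ U := by
    rw [Polynomial.IsPrimitive.Int.dvd_iff_map_cast_dvd_map_cast _ _ primitive,
      Polynomial.map_pow, map_B, mul_pow]
    exact (IsUnit.mul_left_dvd ((Polynomial.isUnit_C.2 (by simp)).pow l)).2
      (Polynomial.pow_rootMultiplicity_dvd _ x)
  have leadingCoeff_B : B.leadingCoeff = x.den := by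
    simpa [B, sub_eq_add_neg] using
      Polynomial.leadingCoeff_linear (b := -x.num) (Int.natCast_ne_zero.2 x.den_nz)
  simpa [leadingCoeff_B] using Polynomial.leadingCoeff_dvd_leadingCoeff dvd

lemma coeff_taylor_rootMultiplicity_ne_zero {K : Type*} [Field K] {U : Polynomial K} (hU : U ≠ 0)
    (x : K) : (Polynomial.taylor x U).coeff (U.rootMultiplicity x) ≠ 0 := by
  rw [Polynomial.rootMultiplicity_eq_natTrailingDegree, ← Polynomial.taylor_apply]
  exact Polynomial.trailingCoeff_nonzero_iff_nonzero.2 (by simpa using hU)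

end RationalRoot

section Slices

variable {n : ℕ} {V : MvPolynomial (Fin n) ℚ} {U : Polynomial ℚ} {W : MvPolynomial (Fin (n + 1)) ℤ}

lemma coeff_cons_eq_of_map_eq_tensor (hW : map (Int.castRingHom ℚ) W = tensor V U)
    (j : ℕ) (J : Fin n →₀ ℕ) : ((coeff (J.cons j) W : ℤ) : ℚ) = coeff J V * U.coeff j := by
  rw [← coeff_tensor, ← hW, coeff_map, eq_intCast]

lemma length_coeff_finSuccEquiv_le {R : Type*} [SeminormedCommRing R]
    (W : MvPolynomial (Fin (n + 1)) R) (j : ℕ) :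
    length ((finSuccEquiv R n W).coeff j) ≤ length W := by
  calc length ((finSuccEquiv R n W).coeff j)
    _ = ∑ S ∈ ((finSuccEquiv R n W).coeff j).support.map
          ⟨_, Finsupp.cons_right_injective j⟩, ‖coeff S W‖ := by
        simp [length, finSuccEquiv_coeff_coeff]
    _ ≤ length W := by
        refine Finset.sum_le_sum_of_subset_of_nonneg (fun S hS => ?_) fun _ _ _ => norm_nonneg _
        obtain ⟨J, hJ, rfl⟩ := Finset.mem_map.1 hS
        exact mem_support_coeff_finSuccEquiv.1 hJ

lemma exists_map_eq_smul_of_map_eq_tensor (hW : map (Int.castRingHom ℚ) W = tensor V U)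
    (hV : V ≠ 0) (hU : U ≠ 0) :
    ∃ V' : MvPolynomial (Fin n) ℤ, V' ≠ 0 ∧ (∃ a : ℚ, map (Int.castRingHom ℚ) V' = a • V) ∧
      (∀ i, degreeOf i V' ≤ degreeOf i.succ W) ∧ length V' ≤ length W := by
  obtain ⟨j, hj⟩ : ∃ j, U.coeff j ≠ 0 := by
    by_contra! h
    exact hU (Polynomial.ext (by simpa using h))
  have map_eq : map (Int.castRingHom ℚ) ((finSuccEquiv ℤ n W).coeff j) = U.coeff j • V := by
    ext J
    rw [coeff_map, finSuccEquiv_coeff_coeff, eq_intCast, coeff_cons_eq_of_map_eq_tensor hW,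
      coeff_smul, smul_eq_mul, mul_comm]
  refine ⟨(finSuccEquiv ℤ n W).coeff j, fun h0 => ?_, ⟨_, map_eq⟩,
    fun i => degreeOf_coeff_finSuccEquiv W i j, length_coeff_finSuccEquiv_le W j⟩
  rw [h0, map_zero] at map_eq
  exact smul_ne_zero hj hV map_eq.symm

lemma den_pow_rootMultiplicity_le_length (hW : map (Int.castRingHom ℚ) W = tensor V U)
    (hV : V ≠ 0) (hU : U ≠ 0) (x : ℚ) : (x.den : ℝ) ^ U.rootMultiplicity x ≤ length W := by
  classical
  obtain ⟨J, hJ⟩ := ne_zero_iff.1 hV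
  let U' : Polynomial ℤ := Polynomial.ofFn (U.natDegree + 1) fun j => coeff (J.cons j) W
  have coeff_U' (j : ℕ) : U'.coeff j = coeff (J.cons j) W := by
    rcases lt_or_ge j (U.natDegree + 1) with hj | hj
    · exact Polynomial.ofFn_coeff_eq_val_of_lt _ hj
    · have := coeff_cons_eq_of_map_eq_tensor hW j J
      rw [Polynomial.coeff_eq_zero_of_natDegree_lt (by omega), mul_zero, Int.cast_eq_zero] at this
      rw [this]
      exact Polynomial.ofFn_coeff_eq_zero_of_ge _ hj
  have map_U' : U'.map (Int.castRingHom ℚ) = Polynomial.C (coeff J V) * U := by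
    ext j
    rw [Polynomial.coeff_map, coeff_U', eq_intCast, coeff_cons_eq_of_map_eq_tensor hW,
      Polynomial.coeff_C_mul]
  have hne : Polynomial.C (coeff J V) * U ≠ 0 := mul_ne_zero (Polynomial.C_ne_zero.2 hJ) hU
  have rootMultiplicity_eq :
      (U'.map (Int.castRingHom ℚ)).rootMultiplicity x = U.rootMultiplicity x := by
    rw [map_U', Polynomial.rootMultiplicity_mul hne, Polynomial.rootMultiplicity_C, zero_add]
  have hU' : U'.leadingCoeff ≠ 0 := by
    rw [Polynomial.leadingCoeff_ne_zero]
    rintro h0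
    rw [h0, Polynomial.map_zero] at map_U'
    exact hne map_U'.symm
  have dvd := den_pow_rootMultiplicity_dvd_leadingCoeff U' x
  rw [rootMultiplicity_eq] at dvd
  calc (x.den : ℝ) ^ U.rootMultiplicity x
    _ ≤ ‖U'.leadingCoeff‖ := by
        rw [Int.norm_eq_abs]
        exact_mod_cast Int.le_of_dvd (abs_pos.2 hU') ((dvd_abs _ _).2 dvd)
    _ ≤ length W := by
        rw [Polynomial.leadingCoeff, coeff_U']
        exact norm_coeff_le_length _ _

end Slices

section RothLemma

lemma mul_sq_div_eight_le_sum_max {k r : ℕ} {τ : ℝ} (hr : 0 < r) (hkr : k ≤ r + 1)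
    (h0 : 0 ≤ τ) (h1 : τ ≤ 1) : k * τ ^ 2 / 8 ≤ ∑ j : Fin k, max 0 (τ - j / r) := by
  rw [Fin.sum_univ_eq_sum_range fun j => max 0 (τ - (j : ℝ) / r)]
  have hr' : (1 : ℝ) ≤ r := mod_cast hr
  have hkr' : (k : ℝ) ≤ r + 1 := mod_cast hkr
  set T := ⌈k * τ / 4⌉₊
  have hT : k * τ / 4 ≤ T := Nat.le_ceil _
  have hTk : T ≤ k := Nat.ceil_le.2 (by nlinarith [(k.cast_nonneg : (0 : ℝ) ≤ k)])
  have large (j : ℕ) (hj : j ∈ Finset.range T) : τ / 2 ≤ max 0 (τ - (j : ℝ) / r) := by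
    rw [Finset.mem_range, Nat.lt_ceil] at hj
    have : (j : ℝ) / r ≤ τ / 2 := by
      rw [div_le_iff₀ (by linarith)]
      nlinarith
    exact le_max_of_le_right (by linarith)
  calc k * τ ^ 2 / 8
    _ ≤ T * (τ / 2) := by nlinarith
    _ ≤ ∑ j ∈ Finset.range T, max 0 (τ - (j : ℝ) / r) := by
        simpa using Finset.card_nsmul_le_sum _ _ _ large
    _ ≤ ∑ j ∈ Finset.range k, max 0 (τ - (j : ℝ) / r) :=
        Finset.sum_le_sum_of_subset_of_nonneg (Finset.range_mono hTk) fun _ _ _ => le_max_left _ _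

lemma degreeOf_det_le {σ R : Type*} [CommRing R] {k d : ℕ} (i : σ)
    {M : Matrix (Fin k) (Fin k) (MvPolynomial σ R)} (hM : ∀ a b, degreeOf i (M a b) ≤ d) :
    degreeOf i M.det ≤ k * d := by
  rw [Matrix.det_apply]
  refine (degreeOf_sum_le _ _ _).trans (Finset.sup_le fun s _ => ?_)
  have unsigned : degreeOf i (s.sign • ∏ j, M (s j) j) = degreeOf i (∏ j, M (s j) j) := by
    rcases Int.units_eq_one_or s.sign with h | h <;> simp [h, degreeOf_neg]
  calc degreeOf i (s.sign • ∏ j, M (s j) j)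
    _ ≤ ∑ j, degreeOf i (M (s j) j) := unsigned ▸ degreeOf_prod_le _ _ _
    _ ≤ ∑ _j : Fin k, d := Finset.sum_le_sum fun j _ => hM (s j) j
    _ = k * d := by simp

lemma two_pow_le_exp (m : ℕ) : (2 : ℝ) ^ m ≤ Real.exp m := by
  rw [← Real.exp_one_pow]
  gcongr
  linarith [Real.add_one_le_exp (1 : ℝ)]

lemma length_det_hasseDeriv_le {σ R : Type*} [Fintype σ] [NormedCommRing R] [NormOneClass R]
    {P : MvPolynomial σ R} {r : σ → ℕ} {y : ℝ} {k : ℕ} (hdeg : ∀ i, degreeOf i P ≤ r i)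
    (hr : ∑ i, (r i : ℝ) ≤ y) (hlen : length P ≤ Real.exp y) (hk : k ≤ 2 ^ ∑ i, r i)
    (I : Fin k → Fin k → σ →₀ ℕ) :
    length (Matrix.of fun i j => hasseDeriv (I i j) P).det ≤ Real.exp (k * (3 * y)) := by
  have two_pow_le : (2 : ℝ) ^ ∑ i, r i ≤ Real.exp y :=
    (two_pow_le_exp _).trans (Real.exp_le_exp.2 (by push_cast; exact hr))
  have entry (i j : Fin k) : length (hasseDeriv (I i j) P) ≤ Real.exp (2 * y) := by
    rw [two_mul, Real.exp_add]
    exact (length_hasseDeriv_le _ hdeg).trans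
      (mul_le_mul two_pow_le hlen (length_nonneg P) (Real.exp_pos y).le)
  have factorial_le : (k.factorial : ℝ) ≤ Real.exp y ^ k := by
    calc (k.factorial : ℝ) ≤ (k : ℝ) ^ k := mod_cast Nat.factorial_le_pow k
      _ ≤ Real.exp y ^ k := by gcongr; exact le_trans (mod_cast hk) two_pow_le
  calc length (Matrix.of fun i j => hasseDeriv (I i j) P).det
    _ ≤ k.factorial * Real.exp (2 * y) ^ k := length_det_le entry
    _ ≤ Real.exp y ^ k * Real.exp (2 * y) ^ k := by gcongr
    _ = Real.exp (k * (3 * y)) := by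
        rw [← mul_pow, ← Real.exp_add, ← Real.exp_nat_mul]
        ring_nf

/-- The weights for which `IndexGE` bounds the index relative to the multidegree `r`. -/
noncomputable abbrev indexWeight {σ : Type*} (r : σ → ℕ) (i : σ) : ℝ := (r i : ℝ)⁻¹

lemma indexWeight_nonneg {σ : Type*} (r : σ → ℕ) (i : σ) : 0 ≤ indexWeight r i := by positivity

lemma weight_indexWeight {σ : Type*} [Fintype σ] (r : σ → ℕ) (I : σ →₀ ℕ) :
    Finsupp.weight (indexWeight r) I = ∑ i, (I i : ℝ) / r i := by
  simp [Finsupp.weight_apply, Finsupp.sum_fintype, div_eq_mul_inv]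

variable {n : ℕ}

lemma weight_cons (r : Fin (n + 1) → ℕ) (j : ℕ) (J : Fin n →₀ ℕ) :
    Finsupp.weight (indexWeight r) (J.cons j) =
      j / r 0 + Finsupp.weight (indexWeight (Fin.tail r)) J := by
  rw [weight_indexWeight, weight_indexWeight, Fin.sum_univ_succ]
  rfl

lemma weight_le_of_degree_le {σ : Type*} {r : σ → ℕ} {d : ℕ} {ω : ℝ} (hω : 0 ≤ ω)
    (hr : ∀ i, 0 < r i) (hd : ∀ i, d ≤ ω * r i) {I : σ →₀ ℕ} (hI : I.degree ≤ d) :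
    Finsupp.weight (indexWeight r) I ≤ ω := by
  rcases d.eq_zero_or_pos with rfl | hd0
  · simpa [(Finsupp.degree_eq_zero_iff I).1 (Nat.le_zero.1 hI)] using hω
  have hd0' : (0 : ℝ) < d := mod_cast hd0
  have inv_le (i : σ) : indexWeight r i ≤ ω / d := by
    have : (0 : ℝ) < r i := mod_cast hr i
    rw [indexWeight, le_div_iff₀ hd0', inv_mul_le_iff₀ this, mul_comm]
    exact hd i
  calc Finsupp.weight (indexWeight r) I
    _ = ∑ i ∈ I.support, I i * indexWeight r i := by
        simp only [Finsupp.weight_apply, Finsupp.sum, nsmul_eq_mul]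
    _ ≤ ∑ i ∈ I.support, I i * (ω / d) := by gcongr with i; exact inv_le i
    _ = I.degree * (ω / d) := by rw [← Finset.sum_mul, Finsupp.degree_apply]; push_cast; rfl
    _ ≤ d * (ω / d) := by gcongr
    _ = ω := mul_div_cancel₀ _ hd0'.ne'

lemma weight_smul_multidegree {σ : Type*} (r : σ → ℕ) {k : ℕ} (hk : k ≠ 0) (I : σ →₀ ℕ) :
    k * Finsupp.weight (indexWeight fun i => k * r i) I = Finsupp.weight (indexWeight r) I := by
  have : (k : ℝ) ≠ 0 := by exact_mod_cast hk
  simp only [Finsupp.weight_apply, Finsupp.sum, indexWeight, Finset.mul_sum, nsmul_eq_mul,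
    Nat.cast_mul]
  refine Finset.sum_congr rfl fun i _ => ?_
  field_simp

lemma indexGE_det_hasseDeriv_cons {R : Type*} [CommRing R] {r : Fin (n + 1) → ℕ}
    {β : Fin (n + 1) → R} {P : MvPolynomial (Fin (n + 1)) R} {θ ω : ℝ} {k : ℕ}
    (hP : IndexGE (indexWeight r) β P θ) {I : Fin k → Fin n →₀ ℕ}
    (hI : ∀ i, Finsupp.weight (indexWeight (Fin.tail r)) (I i) ≤ ω) :
    IndexGE (indexWeight r) β (Matrix.of fun i j : Fin k => hasseDeriv ((I i).cons j) P).det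
      (∑ j : Fin k, max 0 (θ - ω - (j : ℕ) / r 0)) := by
  refine IndexGE.det fun i j L hL => max_le (weight_nonneg (indexWeight_nonneg r) L) ?_
  have := hP.hasseDeriv ((I i).cons j) L hL
  rw [weight_cons] at this
  linarith [hI i]

/-- The hypotheses of Roth's lemma on the multidegree `r` and the rational point `x`: the `r h`
increase rapidly and have a sum small compared to `A`, while `(x h).den ^ r h` is at least
`exp A`. -/
structure IsAdmissible (ω A : ℝ) (r : Fin n → ℕ) (x : Fin n → ℚ) : Prop where
  A_pos : 0 < A
  pos : ∀ h, 0 < r h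
  lacunary : ∀ i j, i < j → r i ≤ ω * r j
  le_log : ∀ h, A ≤ r h * Real.log (x h).den
  sum_le : ∑ h, (r h : ℝ) ≤ ω * A

lemma IsAdmissible.ω_pos {ω A : ℝ} {r : Fin (n + 1) → ℕ} {x : Fin (n + 1) → ℚ}
    (h : IsAdmissible ω A r x) : 0 < ω := by
  have : ∀ i ∈ Finset.univ, (0 : ℝ) < r i := fun i _ => mod_cast h.pos i
  exact pos_of_mul_pos_left ((Finset.sum_pos this Finset.univ_nonempty).trans_le h.sum_le)
    h.A_pos.le

lemma IsAdmissible.mono {ω ω' A : ℝ} {r : Fin n → ℕ} {x : Fin n → ℚ}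
    (h : IsAdmissible ω A r x) (hω : ω ≤ ω') : IsAdmissible ω' A r x where
  A_pos := h.A_pos
  pos := h.pos
  lacunary i j hij := (h.lacunary i j hij).trans (mul_le_mul_of_nonneg_right hω (r j).cast_nonneg)
  le_log := h.le_log
  sum_le := h.sum_le.trans (mul_le_mul_of_nonneg_right hω h.A_pos.le)

lemma IsAdmissible.tail_smul {ω A : ℝ} {r : Fin (n + 1) → ℕ} {x : Fin (n + 1) → ℚ}
    (h : IsAdmissible ω A r x) {k : ℕ} (hk : 0 < k) :
    IsAdmissible ω (k * A) (fun i => k * Fin.tail r i) (Fin.tail x) where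
  A_pos := mul_pos (mod_cast hk) h.A_pos
  pos i := Nat.mul_pos hk (h.pos _)
  lacunary i j hij := by
    push_cast
    rw [mul_left_comm]
    exact mul_le_mul_of_nonneg_left (h.lacunary i.succ j.succ (Fin.succ_lt_succ_iff.2 hij))
      k.cast_nonneg
  le_log i := by
    push_cast
    rw [mul_assoc]
    exact mul_le_mul_of_nonneg_left (h.le_log i.succ) k.cast_nonneg
  sum_le := by
    have tail_sum_le : ∑ i, (Fin.tail r i : ℝ) ≤ ω * A := by
      refine le_trans ?_ h.sum_le
      rw [Fin.sum_univ_succ]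
      exact le_add_of_nonneg_left (r 0).cast_nonneg
    push_cast
    rw [← Finset.mul_sum, mul_left_comm]
    exact mul_le_mul_of_nonneg_left tail_sum_le k.cast_nonneg

lemma degreeOf_map_of_injective {σ R S : Type*} [CommRing R] [CommRing S] {f : R →+* S}
    (P : MvPolynomial σ R) (hf : Function.Injective f) (i : σ) :
    degreeOf i (map f P) = degreeOf i P := by
  classical
  rw [degreeOf_def, degreeOf_def, degrees_map_of_injective P hf]

lemma map_det_hasseDeriv {σ R S : Type*} [Fintype σ] [CommRing R] [CommRing S] (f : R →+* S)
    (P : MvPolynomial σ R) {k : ℕ} (I : Fin k → Fin k → σ →₀ ℕ) :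
    map f (Matrix.of fun i j => hasseDeriv (I i j) P).det =
      (Matrix.of fun i j => hasseDeriv (I i j) (map f P)).det := by
  rw [RingHom.map_det]
  congr 1
  ext1 i j
  exact (hasseDeriv_map f _ _).symm

lemma exists_map_det_hasseDeriv_eq_tensor {P : MvPolynomial (Fin (n + 1)) ℤ} (hP : P ≠ 0) :
    ∃ (k : ℕ) (I : Fin k → Fin n →₀ ℕ) (V : MvPolynomial (Fin n) ℚ) (U : Polynomial ℚ),
      0 < k ∧ k ≤ degreeOf 0 P + 1 ∧ (∀ i, (I i).degree < k) ∧ V ≠ 0 ∧ U ≠ 0 ∧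
      map (Int.castRingHom ℚ) (Matrix.of fun i j : Fin k => hasseDeriv ((I i).cons j) P).det =
        tensor V U := by
  let Q := map (Int.castRingHom ℚ) P
  have hQ0 : Q ≠ 0 := (map_ne_zero_iff _ (map_injective _ Int.cast_injective)).2 hP
  obtain ⟨k, hk, φ, ψ, hφ, hψ, hdec⟩ := exists_eq_sum_tensor Q
  obtain ⟨I, hI, hV⟩ := exists_det_hasseDeriv_ne_zero hφ
  refine ⟨k, I, _, _, Nat.pos_of_ne_zero ?_, ?_, hI, hV, det_polynomial_hasseDeriv_ne_zero hψ, ?_⟩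
  · rintro rfl
    exact hQ0 (by simpa using hdec)
  · rwa [degreeOf_map_of_injective P Int.cast_injective] at hk
  · rw [← det_hasseDeriv_sum_tensor, ← hdec, map_det_hasseDeriv]

lemma IsAdmissible.indexGE_det {ω A ε : ℝ} {r : Fin (n + 1) → ℕ} {x : Fin (n + 1) → ℚ}
    (h : IsAdmissible ω A r x) (hω : ω ≤ ε / 2) (hε : ε ≤ 1) {P : MvPolynomial (Fin (n + 1)) ℚ}
    (hP : IndexGE (indexWeight r) x P ε) {k : ℕ} (hk : k ≤ r 0 + 1) {I : Fin k → Fin n →₀ ℕ}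
    (hI : ∀ i, (I i).degree < k) :
    IndexGE (indexWeight r) x (Matrix.of fun i j : Fin k => hasseDeriv ((I i).cons j) P).det
      (k * (ε ^ 2 / 32)) := by
  have lacunary_tail (i : Fin n) : (r 0 : ℝ) ≤ ω * Fin.tail r i := h.lacunary 0 i.succ i.succ_pos
  have degree_le (i : Fin k) : (I i).degree ≤ r 0 := by have := hI i; omega
  have weight_le (i : Fin k) : Finsupp.weight (indexWeight (Fin.tail r)) (I i) ≤ ε / 2 :=
    (weight_le_of_degree_le (r := Fin.tail r) h.ω_pos.le (fun i => h.pos i.succ) lacunary_tail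
      (degree_le i)).trans hω
  have sum_ge := mul_sq_div_eight_le_sum_max (h.pos 0) hk (τ := ε - ε / 2)
    (by linarith [h.ω_pos]) (by linarith)
  exact (indexGE_det_hasseDeriv_cons hP weight_le).mono (by linarith)

/-- Roth's lemma in `n` variables, with bound `ε` on the index and admissibility parameter `ω`. -/
def RothLemma (n : ℕ) (ε ω : ℝ) : Prop :=
  ∀ ⦃A : ℝ⦄ ⦃r : Fin n → ℕ⦄ ⦃x : Fin n → ℚ⦄ ⦃P : MvPolynomial (Fin n) ℤ⦄, IsAdmissible ω A r x →
    P ≠ 0 → (∀ h, degreeOf h P ≤ r h) → length P ≤ Real.exp (ω * A) →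
    ∃ I, coeff I (translate x (map (Int.castRingHom ℚ) P)) ≠ 0 ∧
      Finsupp.weight (indexWeight r) I ≤ ε

lemma IsAdmissible.rootMultiplicity_le {ω A η : ℝ} {r : Fin (n + 1) → ℕ} {x : Fin (n + 1) → ℚ}
    (h : IsAdmissible ω A r x) (hω : 3 * ω ≤ η) {k l : ℕ}
    (hl : ((x 0).den : ℝ) ^ l ≤ Real.exp (k * (3 * (ω * A)))) : (l : ℝ) / r 0 ≤ k * η := by
  have r_pos : (0 : ℝ) < r 0 := mod_cast h.pos 0
  have log_pos : 0 < Real.log (x 0).den :=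
    pos_of_mul_pos_right (h.A_pos.trans_le (h.le_log 0)) r_pos.le
  have den_pos : (0 : ℝ) < (x 0).den := mod_cast (x 0).den_pos
  rw [div_le_iff₀ r_pos]
  refine le_of_mul_le_mul_right ?_ log_pos
  calc l * Real.log (x 0).den
    _ ≤ k * (3 * (ω * A)) := by
        rwa [← Real.log_pow, Real.log_le_iff_le_exp (pow_pos den_pos l)]
    _ = k * (3 * ω) * A := by ring
    _ ≤ k * η * (r 0 * Real.log (x 0).den) := by
        have := mul_nonneg k.cast_nonneg (by linarith [h.ω_pos] : 0 ≤ η)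
        gcongr
        exacts [h.A_pos.le, h.le_log 0]
    _ = k * η * r 0 * Real.log (x 0).den := by ring

lemma RothLemma.succ {ε ω ω' : ℝ} (ih : RothLemma n (ε ^ 2 / 128) ω') (hε : 0 < ε) (hε1 : ε ≤ 1)
    (hω : ω ≤ ε / 2) (hω' : 3 * ω ≤ ω') (hωε : 3 * ω ≤ ε ^ 2 / 128) : RothLemma (n + 1) ε ω := by
  intro A r x P h hP hdeg hlen
  by_contra! hindex
  obtain ⟨k, I, V, U, hk, hkdeg, hI, hV, hU, hW⟩ := exists_map_det_hasseDeriv_eq_tensor hP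
  have hkr : k ≤ r 0 + 1 := hkdeg.trans (Nat.add_le_add_right (hdeg 0) 1)
  have index_W := h.indexGE_det hω hε1 (fun I hI => (hindex I hI).le) hkr hI
  set W := (Matrix.of fun i j : Fin k => hasseDeriv ((I i).cons j) P).det
  have length_W : length W ≤ Real.exp (k * (3 * (ω * A))) := by
    refine length_det_hasseDeriv_le hdeg h.sum_le hlen (hkr.trans ?_) _
    exact Nat.lt_two_pow_self.trans_le (Nat.pow_le_pow_right two_pos
      (Finset.single_le_sum (fun _ _ => Nat.zero_le _) (Finset.mem_univ 0)))
  have degreeOf_W (i : Fin (n + 1)) : degreeOf i W ≤ k * r i :=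
    degreeOf_det_le i fun _ _ => (degreeOf_hasseDeriv_le _ _ _).trans (hdeg i)
  obtain ⟨V', hV', ⟨a, map_V'⟩, degreeOf_V', length_V'⟩ :=
    exists_map_eq_smul_of_map_eq_tensor hW hV hU
  have length_V'_le : length V' ≤ Real.exp (ω' * (k * A)) := by
    refine (length_V'.trans length_W).trans (Real.exp_le_exp.2 ?_)
    rw [mul_left_comm ω', ← mul_assoc 3]
    have := h.A_pos
    gcongr
  obtain ⟨J, coeff_J, weight_J⟩ := ih ((h.mono (by linarith [h.ω_pos])).tail_smul hk) hV'
    (fun i => (degreeOf_V' i).trans (degreeOf_W i.succ)) length_V'_le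
  set l := U.rootMultiplicity (x 0)
  have hl : (l : ℝ) / r 0 ≤ k * (ε ^ 2 / 128) :=
    h.rootMultiplicity_le hωε ((den_pow_rootMultiplicity_le_length hW hV hU _).trans length_W)
  have coeff_ne_zero : coeff (J.cons l) (translate x (tensor V U)) ≠ 0 := by
    rw [coeff_translate_tensor]
    refine mul_ne_zero ?_ (coeff_taylor_rootMultiplicity_ne_zero hU _)
    rw [map_V', map_smul, coeff_smul] at coeff_J
    exact right_ne_zero_of_smul coeff_J
  have weight_ge : k * (ε ^ 2 / 32) ≤ Finsupp.weight (indexWeight r) (J.cons l) := by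
    refine index_W _ ?_
    rwa [← map_det_hasseDeriv, hW]
  rw [weight_cons, ← weight_smul_multidegree _ hk.ne'] at weight_ge
  have : 0 < k * ε ^ 2 := by positivity
  have : k * Finsupp.weight (indexWeight fun i => k * Fin.tail r i) J ≤ k * (ε ^ 2 / 128) := by
    gcongr
  linarith

theorem exists_rothLemma (n : ℕ) : ∀ {ε : ℝ}, 0 < ε → ε ≤ 1 → ∃ ω > 0, RothLemma n ε ω := by
  induction n with
  | zero =>
    intro ε hε _
    refine ⟨1, one_pos, fun A r x P _ hP _ _ => ⟨0, ?_, by simpa using hε.le⟩⟩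
    obtain ⟨c, rfl⟩ := C_surjective (Fin 0) P
    rw [map_C, translate, aeval_C, algebraMap_eq, coeff_zero_C]
    simpa using hP
  | succ n ih =>
    intro ε hε hε1
    obtain ⟨ω', hω', hn⟩ := ih (ε := ε ^ 2 / 128) (by positivity) (by nlinarith)
    have hmin₁ := min_le_left (ω' / 3) (min (ε ^ 2 / 384) (ε / 2))
    have hmin := min_le_right (ω' / 3) (min (ε ^ 2 / 384) (ε / 2))
    refine ⟨min (ω' / 3) (min (ε ^ 2 / 384) (ε / 2)), by positivity, hn.succ hε hε1 ?_ ?_ ?_⟩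
    · exact hmin.trans (min_le_right _ _)
    · linarith
    · linarith [hmin.trans (min_le_left _ _)]

end RothLemma

section AuxiliaryPolynomial

lemma exists_mul_eq_sum_of_isIntegral {R S : Type*} [CommRing R] [CommRing S] [Algebra R S]
    {α : S} (hα : IsIntegral R α) :
    ∃ (s : ℕ) (v : Fin (s + 1) → S) (A : Matrix (Fin (s + 1)) (Fin (s + 1)) R),
      v 0 = 1 ∧ ∀ i, α * v i = ∑ j, A i j • v j := by
  obtain ⟨s, v, hv⟩ := Submodule.fg_iff_exists_fin_generating_family.1 hα.fg_adjoin_singleton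
  have v_mem (i : Fin s) : v i ∈ Algebra.adjoin R {α} :=
    (Subalgebra.mem_toSubmodule _).1 (hv.le (Submodule.subset_span (Set.mem_range_self i)))
  have mul_mem_span (i : Fin (s + 1)) :
      α * Fin.cons (α := fun _ => S) 1 v i ∈ Submodule.span R (Set.range (Fin.cons 1 v)) := by
    have cons_mem : Fin.cons (α := fun _ => S) 1 v i ∈ Algebra.adjoin R {α} :=
      Fin.cases (one_mem _) v_mem i
    rw [Fin.range_cons]
    exact Submodule.span_mono (Set.subset_insert _ _) (hv.ge
      ((Subalgebra.mem_toSubmodule _).2 (mul_mem (Algebra.self_mem_adjoin_singleton R α) cons_mem)))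
  choose A hA using fun i => (Submodule.mem_span_range_iff_exists_fun R).1 (mul_mem_span i)
  exact ⟨s, Fin.cons 1 v, Matrix.of A, rfl, fun i => (hA i).symm⟩

lemma exists_pow_eq_sum_of_isIntegral {S : Type*} [CommRing S] {α : S} (hα : IsIntegral ℤ α) :
    ∃ (s : ℕ) (v : Fin s → S) (c : ℕ → Fin s → ℤ) (B : ℕ), 1 ≤ B ∧
      ∀ k, α ^ k = ∑ j, c k j • v j ∧ ∀ j, |c k j| ≤ (B : ℤ) ^ k := by
  obtain ⟨s, v, A, hv, hA⟩ := exists_mul_eq_sum_of_isIntegral hα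
  let B : ℕ := 1 + ∑ i, ∑ j, (A i j).natAbs
  have column_le (j : Fin (s + 1)) : ∑ i, |A i j| ≤ (B : ℤ) := by
    have : ∑ i, |A i j| ≤ ∑ i, ∑ j, |A i j| := Finset.sum_le_sum fun i _ =>
      Finset.single_le_sum (f := fun j => |A i j|) (fun _ _ => abs_nonneg _) (Finset.mem_univ j)
    simp only [B, Nat.cast_add, Nat.cast_sum, Int.natCast_natAbs]
    push_cast
    linarith
  suffices ∀ k : ℕ, ∃ c : Fin (s + 1) → ℤ, α ^ k = ∑ j, c j • v j ∧ ∀ j, |c j| ≤ (B : ℤ) ^ k by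
    choose c hc using this
    exact ⟨s + 1, v, c, B, le_self_add, hc⟩
  intro k
  induction k with
  | zero =>
    refine ⟨Pi.single 0 1, by simp [Pi.single_apply, hv], fun j => ?_⟩
    by_cases h : j = 0 <;> simp [h]
  | succ k ih =>
    obtain ⟨c, hc, hcB⟩ := ih
    refine ⟨fun j => ∑ i, c i * A i j, ?_, fun j => ?_⟩
    · simp_rw [pow_succ', hc, Finset.mul_sum, mul_smul_comm, hA, Finset.smul_sum, Finset.sum_smul,
        mul_smul]
      exact Finset.sum_comm
    · calc |∑ i, c i * A i j|
        _ ≤ ∑ i, |c i| * |A i j| := by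
            simpa only [abs_mul] using Finset.abs_sum_le_sum_abs (fun i => c i * A i j) _
        _ ≤ ∑ i, (B : ℤ) ^ k * |A i j| := by gcongr with i; exact hcB i
        _ ≤ (B : ℤ) ^ (k + 1) := by rw [← Finset.mul_sum, pow_succ]; gcongr; exact column_le j

open scoped Matrix.Norms.Elementwise in
lemma exists_mulVec_eq_zero {ι κ : Type*} [Fintype ι] [Fintype κ] (M : Matrix ι κ ℤ) {H : ℕ}
    (hH : 1 ≤ H) (hM : ∀ i j, |M i j| ≤ H) (hκ : 0 < Fintype.card κ)
    (hι : 2 * Fintype.card ι ≤ Fintype.card κ) :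
    ∃ t : κ → ℤ, t ≠ 0 ∧ M.mulVec t = 0 ∧ ∀ j, |t j| ≤ Fintype.card κ * H := by
  have one_le : 1 ≤ Fintype.card κ * H := Nat.mul_pos hκ hH
  have : Nonempty κ := Fintype.card_pos_iff.1 hκ
  rcases isEmpty_or_nonempty ι with _ | _
  · exact ⟨1, one_ne_zero, Subsingleton.elim _ _, fun j => by simpa using mod_cast one_le⟩
  have card_pos : 0 < Fintype.card ι := Fintype.card_pos
  obtain ⟨t, ht, htM, htn⟩ := Int.Matrix.exists_ne_zero_int_vec_norm_le M (by omega) card_pos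
  refine ⟨t, ht, htM, fun j => ?_⟩
  have norm_le : max 1 ‖M‖ ≤ H := max_le (mod_cast hH) ((Matrix.norm_le_iff H.cast_nonneg).2
    fun i j => by rw [Int.norm_eq_abs]; exact_mod_cast hM i j)
  have exponent_le : (Fintype.card ι : ℝ) / (Fintype.card κ - Fintype.card ι) ≤ 1 := by
    have : (2 : ℝ) * Fintype.card ι ≤ Fintype.card κ := mod_cast hι
    have : (0 : ℝ) < Fintype.card ι := mod_cast card_pos
    rw [div_le_one (by linarith)]
    linarith
  have base_ge : 1 ≤ Fintype.card κ * max 1 ‖M‖ :=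
    one_le_mul_of_one_le_of_one_le (mod_cast hκ) (le_max_left _ _)
  suffices |(t j : ℝ)| ≤ Fintype.card κ * H by exact_mod_cast this
  calc |(t j : ℝ)|
    _ ≤ ‖t‖ := by simpa only [Int.norm_eq_abs] using norm_le_pi_norm t j
    _ ≤ (Fintype.card κ * max 1 ‖M‖) ^ (1 : ℝ) :=
        htn.trans (Real.rpow_le_rpow_of_exponent_le base_ge exponent_le)
    _ ≤ Fintype.card κ * H := by rw [Real.rpow_one]; gcongr

lemma coeff_translate_const_monomial {σ R : Type*} [Fintype σ] [CommRing R] (α c : R)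
    (I J : σ →₀ ℕ) :
    coeff I (translate (fun _ => α) (monomial J c)) = c * prodChoose J I * α ^ (J - I).degree := by
  rw [coeff_translate, hasseDeriv_monomial, eval_monomial, Finsupp.degree_eq_sum,
    Finsupp.prod_fintype _ _ fun _ => pow_zero _, Finset.prod_pow_eq_pow_sum]

/-- The multi-indices `I` with `I i ≤ r i` for all `i`. -/
noncomputable def box {σ : Type*} [Fintype σ] [DecidableEq σ] (r : σ → ℕ) : Finset (σ →₀ ℕ) :=
  (Fintype.piFinset fun i => Finset.range (r i + 1)).map Finsupp.equivFunOnFinite.symm.toEmbedding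

variable {σ : Type*} [Fintype σ] [DecidableEq σ] {r : σ → ℕ}

lemma mem_box {I : σ →₀ ℕ} : I ∈ box r ↔ ∀ i, I i ≤ r i := by
  simp [box, Finset.mem_map_equiv]

lemma sum_box_prod {R : Type*} [CommSemiring R] (f : σ → ℕ → R) :
    ∑ I ∈ box r, ∏ i, f i (I i) = ∏ i, ∑ j ∈ Finset.range (r i + 1), f i j := by
  rw [Finset.prod_univ_sum, box, Finset.sum_map]
  rfl

lemma card_box : (box r).card = ∏ i, (r i + 1) := by
  simpa using sum_box_prod (r := r) (R := ℕ) fun _ _ => 1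

lemma card_box_le : (box r).card ≤ 2 ^ ∑ i, r i := by
  rw [card_box, ← Finset.prod_pow_eq_pow_sum]
  exact Finset.prod_le_prod' fun i _ => Nat.lt_two_pow_self

lemma sum_exp_mul_half_sub_div_le {d : ℕ} (hd : 0 < d) (l : ℝ) :
    ∑ j ∈ Finset.range (d + 1), Real.exp (l * (1 / 2 - j / d)) ≤
      (d + 1) * Real.exp (l ^ 2 / 8) := by
  have hd' : (0 : ℝ) < d := mod_cast hd
  have reflect : ∑ j ∈ Finset.range (d + 1), Real.exp (-(l * (1 / 2 - j / d))) =
      ∑ j ∈ Finset.range (d + 1), Real.exp (l * (1 / 2 - j / d)) := by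
    rw [← Finset.sum_range_reflect]
    refine Finset.sum_congr rfl fun j hj => ?_
    rw [Nat.add_sub_cancel, Nat.cast_sub (Nat.lt_succ_iff.1 (Finset.mem_range.1 hj))]
    congr 1
    field_simp
    ring
  have cosh_le (j : ℕ) (hj : j ∈ Finset.range (d + 1)) :
      Real.cosh (l * (1 / 2 - j / d)) ≤ Real.exp (l ^ 2 / 8) := by
    refine (Real.cosh_le_exp_half_sq _).trans (Real.exp_le_exp.2 ?_)
    have h0 : (0 : ℝ) ≤ j / d := by positivity
    have h1 : (j : ℝ) / d ≤ 1 :=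
      (div_le_one hd').2 (mod_cast Nat.lt_succ_iff.1 (Finset.mem_range.1 hj))
    have : (1 / 2 - (j : ℝ) / d) ^ 2 ≤ 1 / 4 := by nlinarith
    rw [mul_pow]
    nlinarith [sq_nonneg l]
  calc ∑ j ∈ Finset.range (d + 1), Real.exp (l * (1 / 2 - j / d))
    _ = ∑ j ∈ Finset.range (d + 1), Real.cosh (l * (1 / 2 - j / d)) := by
        simp only [Real.cosh_eq, ← Finset.sum_div, Finset.sum_add_distrib, reflect]
        ring
    _ ≤ (d + 1) * Real.exp (l ^ 2 / 8) := by simpa using Finset.sum_le_card_nsmul _ _ _ cosh_le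

/-- Chernoff's bound: the mean weight of the multi-indices in the box is `card σ / 2`. -/
lemma card_filter_weight_lt_mul_exp_le (hr : ∀ i, 0 < r i) {η : ℝ} (hη : 0 ≤ η) :
    ((box r).filter fun I => Finsupp.weight (indexWeight r) I <
      Fintype.card σ * (1 / 2 - η)).card * Real.exp (2 * Fintype.card σ * η ^ 2) ≤
        (box r).card := by
  set m : ℝ := (Fintype.card σ : ℝ) with hm
  set s := (box r).filter fun I => Finsupp.weight (indexWeight r) I < m * (1 / 2 - η)
  have exp_le (I : σ →₀ ℕ) (hI : I ∈ s) : Real.exp (2 * m * η ^ 2) * Real.exp (2 * m * η ^ 2) ≤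
      ∏ i, Real.exp (4 * η * (1 / 2 - I i / r i)) := by
    have weight_lt := (Finset.mem_filter.1 hI).2
    rw [weight_indexWeight] at weight_lt
    rw [← Real.exp_sum, ← Real.exp_add, ← Finset.mul_sum, Finset.sum_sub_distrib]
    simp only [Finset.sum_const, Finset.card_univ, nsmul_eq_mul, ← hm]
    exact Real.exp_le_exp.2 (by nlinarith)
  refine le_of_mul_le_mul_right ?_ (Real.exp_pos (2 * m * η ^ 2))
  calc s.card * Real.exp (2 * m * η ^ 2) * Real.exp (2 * m * η ^ 2)
    _ ≤ ∑ I ∈ s, ∏ i, Real.exp (4 * η * (1 / 2 - I i / r i)) := by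
        rw [mul_assoc, ← nsmul_eq_mul]
        exact Finset.card_nsmul_le_sum _ _ _ exp_le
    _ ≤ ∑ I ∈ box r, ∏ i, Real.exp (4 * η * (1 / 2 - I i / r i)) :=
        Finset.sum_le_sum_of_subset_of_nonneg (Finset.filter_subset _ _) fun _ _ _ => by positivity
    _ = ∏ i, ∑ j ∈ Finset.range (r i + 1), Real.exp (4 * η * (1 / 2 - j / r i)) :=
        sum_box_prod fun i j => Real.exp (4 * η * (1 / 2 - j / r i))
    _ ≤ ∏ i, ((r i + 1) * Real.exp ((4 * η) ^ 2 / 8)) :=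
        Finset.prod_le_prod (fun _ _ => by positivity) fun i _ =>
          sum_exp_mul_half_sub_div_le (hr i) _
    _ = (box r).card * Real.exp (2 * m * η ^ 2) := by
        rw [card_box, Finset.prod_mul_distrib, Finset.prod_const, ← Real.exp_nat_mul,
          Finset.card_univ, hm]
        push_cast
        ring_nf

lemma degreeOf_sum_monomial_box_le (t : box r → ℤ) (i : σ) :
    degreeOf i (∑ J : box r, monomial J.1 (t J)) ≤ r i := by
  refine (degreeOf_sum_le _ _ _).trans (Finset.sup_le fun J _ => degreeOf_le_iff.2 fun K hK => ?_)
  rw [Finset.mem_singleton.1 (support_monomial_subset hK)]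
  exact mem_box.1 J.2 i

lemma length_sum_monomial_box_le {t : box r → ℤ} {H : ℝ} (ht : ∀ J, |(t J : ℝ)| ≤ H) :
    length (∑ J : box r, monomial J.1 (t J)) ≤ (box r).card * H := by
  refine (length_sum_le _ _).trans ?_
  simpa [length_monomial, Int.norm_eq_abs] using
    Finset.sum_le_card_nsmul Finset.univ _ _ fun J _ => ht J

lemma abs_prodChoose_mul_le {J : σ →₀ ℕ} (hJ : J ∈ box r) (I : σ →₀ ℕ) {B : ℕ} (hB : 1 ≤ B)
    {a : ℤ} (ha : |a| ≤ (B : ℤ) ^ (J - I).degree) :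
    |prodChoose J I * a| ≤ ((2 * B) ^ ∑ i, r i : ℕ) := by
  have choose_le := prodChoose_le (mem_box.1 hJ) I
  have degree_le : (J - I).degree ≤ ∑ i, r i := by
    rw [Finsupp.degree_eq_sum]
    exact Finset.sum_le_sum fun i _ => (Nat.sub_le _ _).trans (mem_box.1 hJ i)
  have pow_le : (B : ℤ) ^ (J - I).degree ≤ (B : ℤ) ^ ∑ i, r i :=
    pow_le_pow_right₀ (mod_cast hB) degree_le
  rw [abs_mul, Nat.abs_cast, mul_pow]
  push_cast
  exact mul_le_mul (mod_cast choose_le) (ha.trans pow_le) (abs_nonneg _) (by positivity)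

/-- Siegel's lemma applied to the `s` integer equations which express that a Taylor coefficient
at `α` vanishes. -/
lemma exists_coeff_translate_eq_zero {α : ℝ} {s : ℕ} {v : Fin s → ℝ} {c : ℕ → Fin s → ℤ} {B : ℕ}
    (hB : 1 ≤ B) (hα : ∀ k, α ^ k = ∑ j, c k j • v j ∧ ∀ j, |c k j| ≤ (B : ℤ) ^ k)
    {T : Finset (σ →₀ ℕ)} (hT : 2 * (T.card * s) ≤ (box r).card) :
    ∃ P : MvPolynomial σ ℤ, P ≠ 0 ∧ (∀ i, degreeOf i P ≤ r i) ∧ length P ≤ (8 * B) ^ ∑ i, r i ∧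
      ∀ I ∈ T, coeff I (translate (fun _ => α) (map (Int.castRingHom ℝ) P)) = 0 := by
  let M : Matrix (T × Fin s) (box r) ℤ := fun x J =>
    prodChoose J.1 x.1.1 * c (J.1 - x.1.1).degree x.2
  obtain ⟨t, ht, htM, ht_le⟩ := exists_mulVec_eq_zero M (Nat.one_le_pow _ _ (by omega))
    (fun x J => abs_prodChoose_mul_le J.2 x.1.1 hB ((hα _).2 _)) (by simp [card_box])
    (by simpa using hT)
  have coeff_P (J : box r) : coeff J.1 (∑ K : box r, monomial K.1 (t K)) = t J := by
    simp [coeff_sum, coeff_monomial]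
  refine ⟨∑ J : box r, monomial J.1 (t J), fun h => ht ?_, fun i => ?_, ?_, fun I hI => ?_⟩
  · ext J
    rw [← coeff_P, h, coeff_zero, Pi.zero_apply]
  · exact degreeOf_sum_monomial_box_le t i
  · calc length (∑ J : box r, monomial J.1 (t J))
      _ ≤ (box r).card * ((box r).card * (2 * B : ℝ) ^ ∑ i, r i) := by
          refine length_sum_monomial_box_le fun J => ?_
          simpa using Int.cast_le (R := ℝ).2 (ht_le J)
      _ ≤ 2 ^ (∑ i, r i) * (2 ^ (∑ i, r i) * (2 * B : ℝ) ^ ∑ i, r i) := by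
          have : ((box r).card : ℝ) ≤ 2 ^ ∑ i, r i := mod_cast card_box_le
          gcongr
      _ = (8 * B) ^ ∑ i, r i := by
          rw [← mul_pow, ← mul_pow]
          ring_nf
  · have row (a : Fin s) : ∑ J : box r, (M (⟨I, hI⟩, a) J : ℝ) * t J = 0 := by
      exact_mod_cast congrFun htM (⟨I, hI⟩, a)
    simp only [map_sum, map_monomial, coeff_sum, coeff_translate_const_monomial, (hα _).1,
      Finset.mul_sum]
    rw [Finset.sum_comm]
    refine Finset.sum_eq_zero fun a _ => ?_
    rw [← zero_mul (v a), ← row a, Finset.sum_mul]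
    refine Finset.sum_congr rfl fun J _ => ?_
    simp only [M, zsmul_eq_mul, eq_intCast]
    push_cast
    ring

theorem exists_auxiliary_polynomial {α : ℝ} (hα : IsIntegral ℤ α) : ∃ D B : ℝ, 1 ≤ B ∧
    ∀ {σ : Type} [Fintype σ] {r : σ → ℕ} {η : ℝ}, (∀ i, 0 < r i) → 0 ≤ η →
      D ≤ Real.exp (2 * Fintype.card σ * η ^ 2) →
      ∃ P : MvPolynomial σ ℤ, P ≠ 0 ∧ (∀ i, degreeOf i P ≤ r i) ∧ length P ≤ B ^ ∑ i, r i ∧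
        IndexGE (indexWeight r) (fun _ => α) (map (Int.castRingHom ℝ) P)
          (Fintype.card σ * (1 / 2 - η)) := by
  classical
  obtain ⟨s, v, c, B, hB, hpow⟩ := exists_pow_eq_sum_of_isIntegral hα
  have hB' : (1 : ℝ) ≤ B := mod_cast hB
  refine ⟨2 * s, 8 * B, by linarith, fun {σ} _ r η hr hη hD => ?_⟩
  have card_le := card_filter_weight_lt_mul_exp_le hr hη
  set T := (box r).filter fun I => Finsupp.weight (indexWeight r) I < Fintype.card σ * (1 / 2 - η)
  have hT : 2 * (T.card * s) ≤ (box r).card := by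
    have : (T.card : ℝ) * (2 * s) ≤ (box r).card := card_le.trans' (by gcongr)
    have : T.card * (2 * s) ≤ (box r).card := mod_cast this
    linarith
  obtain ⟨P, hP, hdeg, hlen, hzero⟩ := exists_coeff_translate_eq_zero hB hpow hT
  refine ⟨P, hP, hdeg, hlen, fun I hI => ?_⟩
  have mem : I ∈ box r := mem_box.2 fun i =>
    (monomial_le_degreeOf i (mem_support_iff.2 hI)).trans ((degreeOf_translate_le i _ _).trans
      ((degreeOf_map_of_injective P Int.cast_injective i).trans_le (hdeg i)))
  contrapose! hI
  exact hzero I (Finset.mem_filter.2 ⟨mem, hI⟩)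

end AuxiliaryPolynomial

section Evaluation

variable {σ : Type*}

lemma eval_map_intCast_ratCast (P : MvPolynomial σ ℤ) (x : σ → ℚ) :
    eval (fun i => (x i : ℝ)) (map (Int.castRingHom ℝ) P) =
      (eval x (map (Int.castRingHom ℚ) P) : ℚ) := by
  have h := eval₂_comp_left (Rat.castHom ℝ) (Int.castRingHom ℚ) x P
  rw [Subsingleton.elim ((Rat.castHom ℝ).comp (Int.castRingHom ℚ)) (Int.castRingHom ℝ)] at h
  rw [eval_map, eval_map]
  exact h.symm

variable [Fintype σ]

lemma one_le_prod_den_pow_mul_abs_eval {P : MvPolynomial σ ℤ} {r : σ → ℕ}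
    (hdeg : ∀ i, degreeOf i P ≤ r i) {x : σ → ℚ} (h : eval x (map (Int.castRingHom ℚ) P) ≠ 0) :
    1 ≤ (∏ i, ((x i).den : ℚ) ^ r i) * |eval x (map (Int.castRingHom ℚ) P)| := by
  have integral : (∏ i, ((x i).den : ℚ) ^ r i) * eval x (map (Int.castRingHom ℚ) P) =
      (∑ S ∈ P.support, coeff S P * ∏ i, ((x i).num ^ S i * (x i).den ^ (r i - S i)) : ℤ) := by
    rw [eval_map, eval₂_eq', Finset.mul_sum]
    push_cast
    refine Finset.sum_congr rfl fun S hS => ?_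
    rw [mul_left_comm, ← Finset.prod_mul_distrib, eq_intCast]
    congr 1
    refine Finset.prod_congr rfl fun i _ => ?_
    have hSi : S i ≤ r i := (monomial_le_degreeOf i hS).trans (hdeg i)
    rw [← pow_sub_mul_pow _ hSi, mul_assoc, ← mul_pow, Rat.den_mul_eq_num, mul_comm]
  have den_prod_pos : 0 < ∏ i, ((x i).den : ℚ) ^ r i :=
    Finset.prod_pos fun i _ => pow_pos (mod_cast (x i).den_pos) _
  rw [← abs_of_pos den_prod_pos, ← abs_mul]
  have ne_zero := mul_ne_zero den_prod_pos.ne' h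
  rw [integral] at ne_zero ⊢
  exact_mod_cast Int.one_le_abs (Int.cast_ne_zero.1 ne_zero)

lemma one_le_exp_mul_abs_eval {P : MvPolynomial σ ℤ} {r : σ → ℕ}
    (hdeg : ∀ i, degreeOf i P ≤ r i) {x : σ → ℚ} (h : eval x (map (Int.castRingHom ℚ) P) ≠ 0) :
    1 ≤ Real.exp (∑ i, r i * Real.log (x i).den) *
      |eval (fun i => (x i : ℝ)) (map (Int.castRingHom ℝ) P)| := by
  have exp_eq : Real.exp (∑ i, r i * Real.log (x i).den) = ∏ i, ((x i).den : ℝ) ^ r i := by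
    rw [Real.exp_sum]
    refine Finset.prod_congr rfl fun i _ => ?_
    rw [Real.exp_nat_mul, Real.exp_log (mod_cast (x i).den_pos)]
  rw [exp_eq, eval_map_intCast_ratCast]
  exact_mod_cast one_le_prod_den_pow_mul_abs_eval hdeg h

end Evaluation

lemma abs_eval_le_of_indexGE {σ : Type*} {w β x : σ → ℝ} {θ T : ℝ} {Q : MvPolynomial σ ℝ}
    (hQ : IndexGE w β Q θ) (hT : 0 ≤ T) (hx : ∀ i, |x i - β i| ≤ Real.exp (-(T * w i))) :
    |eval x Q| ≤ length (translate β Q) * Real.exp (-(T * θ)) := by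
  have monomial_le (I : σ →₀ ℕ) (hI : I ∈ (translate β Q).support) :
      ∏ i ∈ I.support, |(x - β) i| ^ I i ≤ Real.exp (-(T * θ)) := by
    have weight_ge := hQ I (mem_support_iff.1 hI)
    rw [Finsupp.weight_apply, Finsupp.sum] at weight_ge
    calc ∏ i ∈ I.support, |(x - β) i| ^ I i
      _ ≤ ∏ i ∈ I.support, Real.exp (-(T * w i)) ^ I i := by gcongr with i; exact hx i
      _ = Real.exp (-(T * ∑ i ∈ I.support, I i • w i)) := by
          simp only [← Real.exp_nat_mul, ← Real.exp_sum, Finset.mul_sum, ← Finset.sum_neg_distrib,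
            nsmul_eq_mul, mul_neg, mul_left_comm]
      _ ≤ Real.exp (-(T * θ)) := by gcongr
  rw [← eval_sub_translate β x Q, eval_eq, length, Finset.sum_mul]
  refine (Finset.abs_sum_le_sum_abs _ _).trans (Finset.sum_le_sum fun I hI => ?_)
  simp only [abs_mul, Finset.abs_prod, abs_pow]
  exact mul_le_mul_of_nonneg_left (monomial_le I hI) (abs_nonneg _)

section Approximation

variable {n : ℕ}

lemma IsAdmissible.le_of_rothLemma {α δ ω η A θ : ℝ} {r : Fin n → ℕ} {x : Fin n → ℚ}
    (h : IsAdmissible ω A r x) (roth : RothLemma n η ω) {P : MvPolynomial (Fin n) ℤ} (hP : P ≠ 0)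
    (hdeg : ∀ i, degreeOf i P ≤ r i) (hlen : length P ≤ Real.exp (ω * A))
    (hlen_translate : (1 + |α|) ^ (∑ i, r i) * (2 ^ (∑ i, r i) * length P) ≤ Real.exp (η * A))
    (hindex : IndexGE (indexWeight r) (fun _ => α) (map (Int.castRingHom ℝ) P) θ)
    (hlog : ∀ i, r i * Real.log (x i).den ≤ (1 + η) * A) (hδ : 0 ≤ 2 + δ)
    (hx : ∀ i, |(x i : ℝ) - α| ≤ Real.exp (-((2 + δ) * Real.log (x i).den))) :
    (2 + δ) * (θ - η) ≤ η + n * (1 + η) := by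
  obtain ⟨I, coeff_ne_zero, weight_I⟩ := roth h hP hdeg hlen
  rw [coeff_translate, hasseDeriv_map] at coeff_ne_zero
  set N := hasseDeriv I P
  have degreeOf_N (i : Fin n) : degreeOf i N ≤ r i := (degreeOf_hasseDeriv_le i I P).trans (hdeg i)
  set y := eval (fun i => (x i : ℝ)) (map (Int.castRingHom ℝ) N)
  have lower : 1 ≤ Real.exp (n * ((1 + η) * A)) * |y| := by
    have sum_le : ∑ i, r i * Real.log (x i).den ≤ n * ((1 + η) * A) := by
      simpa using Finset.sum_le_card_nsmul Finset.univ _ _ fun i _ => hlog i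
    exact (one_le_exp_mul_abs_eval degreeOf_N coeff_ne_zero).trans (by gcongr)
  have upper : |y| ≤ Real.exp (η * A) * Real.exp (-((2 + δ) * A * (θ - η))) := by
    have index_N : IndexGE (indexWeight r) (fun _ => α) (map (Int.castRingHom ℝ) N) (θ - η) := by
      rw [← hasseDeriv_map]
      exact (hindex.hasseDeriv I).mono (by linarith)
    have length_le : length (translate (fun _ => α) (map (Int.castRingHom ℝ) N)) ≤
        Real.exp (η * A) := by
      refine (length_translate_le (r := r) (fun _ => le_rfl) fun i => ?_).trans
        (le_trans ?_ hlen_translate)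
      · exact (degreeOf_map_of_injective N Int.cast_injective i).trans_le (degreeOf_N i)
      · rw [length_map_intCast, Real.norm_eq_abs]
        gcongr
        exact length_hasseDeriv_le I hdeg
    refine (abs_eval_le_of_indexGE index_N (mul_nonneg hδ h.A_pos.le) fun i => ?_).trans
      (mul_le_mul_of_nonneg_right length_le (Real.exp_pos _).le)
    refine (hx i).trans (Real.exp_le_exp.2 (neg_le_neg ?_))
    rw [mul_assoc]
    refine mul_le_mul_of_nonneg_left ?_ hδ
    rw [indexWeight, mul_inv_le_iff₀ (mod_cast h.pos i), mul_comm]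
    exact h.le_log i
  have combined := lower.trans (mul_le_mul_of_nonneg_left upper (Real.exp_pos _).le)
  rw [← Real.exp_add, ← Real.exp_add, Real.one_le_exp_iff] at combined
  exact le_of_mul_le_mul_right (by linarith) h.A_pos

lemma exists_lacunary_of_unbounded {ι : Type*} {f : ι → ℝ} (hf : ∀ L, ∃ i, L ≤ f i) (c L : ℝ)
    (m : ℕ) : ∃ x : Fin m → ι, (∀ i, L ≤ f (x i)) ∧ ∀ i j, i < j → c * f (x j) ≤ f (x i) := by
  induction m with
  | zero => exact ⟨Fin.elim0, fun i => i.elim0, fun i => i.elim0⟩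
  | succ m ih =>
    obtain ⟨x, hL, hc⟩ := ih
    obtain ⟨M, hM⟩ := Finite.exists_le fun j => c * f (x j)
    obtain ⟨y, hy⟩ := hf (max L M)
    refine ⟨Fin.cons y x, Fin.cases (le_of_max_le_left hy) hL, fun i j hij => ?_⟩
    obtain ⟨j, rfl⟩ := Fin.exists_succ_eq.2 (Fin.ne_zero_of_lt hij)
    refine Fin.cases (fun _ => (hM j).trans (le_of_max_le_right hy)) (fun i hij => ?_) i hij
    exact hc i j (Fin.succ_lt_succ_iff.1 hij)

lemma exists_isAdmissible {ω η : ℝ} (hω : 0 < ω) (hη : 0 < η) (hη1 : η ≤ 1) {x : Fin n → ℚ}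
    (hL : ∀ i, 2 * (n + 1) / ω ≤ Real.log (x i).den)
    (hlac : ∀ i j, i < j → 2 / ω * Real.log (x j).den ≤ Real.log (x i).den) :
    ∃ A r, IsAdmissible ω A r x ∧ ∀ i, r i * Real.log (x i).den ≤ (1 + η) * A := by
  have log_pos (i : Fin n) : 0 < Real.log (x i).den := lt_of_lt_of_le (by positivity) (hL i)
  obtain ⟨M, hM⟩ := Finite.exists_le fun i => Real.log (x i).den
  set A := max 1 (M / η)
  have A_pos : 0 < A := lt_max_of_lt_left one_pos
  have log_le (i : Fin n) : Real.log (x i).den ≤ η * A :=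
    (hM i).trans ((div_le_iff₀' hη).1 (le_max_right _ _))
  let r (i : Fin n) : ℕ := ⌈A / Real.log (x i).den⌉₊
  have le_log (i : Fin n) : A ≤ r i * Real.log (x i).den :=
    (div_le_iff₀ (log_pos i)).1 (Nat.le_ceil _)
  have log_r_le (i : Fin n) : r i * Real.log (x i).den ≤ (1 + η) * A := by
    have ceil_le : (r i : ℝ) ≤ A / Real.log (x i).den + 1 :=
      (Nat.ceil_lt_add_one (div_pos A_pos (log_pos i)).le).le
    have := mul_le_mul_of_nonneg_right ceil_le (log_pos i).le
    rw [add_mul, div_mul_cancel₀ _ (log_pos i).ne'] at this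
    linarith [log_le i]
  have log_r_le_two (i : Fin n) : r i * Real.log (x i).den ≤ 2 * A := by nlinarith [log_r_le i]
  refine ⟨A, r, ⟨A_pos, fun i => Nat.ceil_pos.2 (div_pos A_pos (log_pos i)), fun i j hij => ?_,
    le_log, ?_⟩, log_r_le⟩
  · have : r i * (2 / ω * Real.log (x j).den) ≤ 2 * (r j * Real.log (x j).den) := by
      nlinarith [mul_le_mul_of_nonneg_left (hlac i j hij) (r i).cast_nonneg, log_r_le_two i,
        le_log j]
    have : r i * (2 / ω) ≤ 2 * r j := le_of_mul_le_mul_right (by linarith) (log_pos j)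
    rw [mul_div_assoc', div_le_iff₀ hω] at this
    linarith
  · have r_le (i : Fin n) : r i * (2 * (n + 1) / ω) ≤ 2 * A :=
      (mul_le_mul_of_nonneg_left (hL i) (r i).cast_nonneg).trans (log_r_le_two i)
    have : (∑ i, (r i : ℝ)) * (2 * (n + 1) / ω) ≤ n * (2 * A) := by
      rw [Finset.sum_mul]
      simpa using Finset.sum_le_card_nsmul Finset.univ _ _ fun i _ => r_le i
    rw [mul_div_assoc', div_le_iff₀ hω] at this
    have : (∑ i, (r i : ℝ)) * (n + 1) ≤ ω * A * (n + 1) := by nlinarith [mul_pos hω A_pos]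
    exact le_of_mul_le_mul_right this (by positivity)

end Approximation

section RothTheorem

lemma IsAdmissible.pow_sum_le_exp {n : ℕ} {ω A C t : ℝ} {r : Fin n → ℕ} {x : Fin n → ℚ}
    (h : IsAdmissible ω A r x) (hC : 1 ≤ C) (ht : ω * Real.log C ≤ t) :
    C ^ ∑ i, r i ≤ Real.exp (t * A) := by
  rw [← Real.exp_log (zero_lt_one.trans_le hC), ← Real.exp_nat_mul, Real.exp_le_exp, Nat.cast_sum]
  calc (∑ i, (r i : ℝ)) * Real.log C
    _ ≤ ω * A * Real.log C := mul_le_mul_of_nonneg_right h.sum_le (Real.log_nonneg hC)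
    _ = ω * Real.log C * A := by ring
    _ ≤ t * A := mul_le_mul_of_nonneg_right ht h.A_pos.le

/-- A family of approximations to `α` of exponent `2 + δ`, whose denominators have logarithms at
least `L` that decrease by a factor of at least `c` from each index to the next. -/
structure IsLacunaryApprox {n : ℕ} (α δ c L : ℝ) (x : Fin n → ℚ) : Prop where
  abs_sub_le : ∀ i, |(x i : ℝ) - α| ≤ Real.exp (-((2 + δ) * Real.log (x i).den))
  le_log : ∀ i, L ≤ Real.log (x i).den
  lacunary : ∀ i j, i < j → c * Real.log (x j).den ≤ Real.log (x i).den

lemma exists_nat_le_exp_mul_sq (D : ℝ) {η : ℝ} (hη : 0 < η) :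
    ∃ n : ℕ, (1 : ℝ) ≤ n ∧ D ≤ Real.exp (2 * n * η ^ 2) := by
  obtain ⟨n, hn⟩ := exists_nat_ge (max 1 (D / (2 * η ^ 2)))
  refine ⟨n, (le_max_left _ _).trans hn, ?_⟩
  have := (div_le_iff₀ (by positivity)).1 ((le_max_right 1 _).trans hn)
  linarith [Real.add_one_le_exp (2 * n * η ^ 2)]

lemma exists_forall_not_isLacunaryApprox {α δ : ℝ} (hα : IsIntegral ℤ α) (hδ : 0 < δ)
    (hδ1 : δ ≤ 1) : ∃ n c L, ∀ x : Fin n → ℚ, ¬IsLacunaryApprox α δ c L x := by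
  obtain ⟨D, B, hB, auxiliary⟩ := exists_auxiliary_polynomial hα
  obtain ⟨η, hη⟩ : ∃ η, η = δ / 24 := ⟨_, rfl⟩
  have η_pos : 0 < η := by linarith
  have η_le_one : η ≤ 1 := by linarith
  obtain ⟨n, one_le_n, D_le⟩ := exists_nat_le_exp_mul_sq D η_pos
  obtain ⟨ω, ω_pos, rothLemma⟩ := exists_rothLemma n η_pos η_le_one
  set C := (1 + |α|) * (2 * B)
  have B_le : B ≤ C := by nlinarith [mul_nonneg (abs_nonneg α) (zero_le_one.trans hB)]
  have log_C_nonneg : 0 ≤ Real.log C := Real.log_nonneg (hB.trans B_le)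
  set ω' := min ω η / (1 + Real.log C)
  have ω'_pos : 0 < ω' := div_pos (lt_min ω_pos η_pos) (by linarith)
  have mul_ω' : ω' * (1 + Real.log C) = min ω η := div_mul_cancel₀ _ (by linarith)
  have ω'_le : ω' ≤ min ω η := by nlinarith
  refine ⟨n, 2 / ω', 2 * (n + 1) / ω', fun x hx => ?_⟩
  obtain ⟨A, r, admissible, log_le⟩ :=
    exists_isAdmissible ω'_pos η_pos η_le_one hx.le_log hx.lacunary
  obtain ⟨P, hP, hdeg, hlen, hindex⟩ := auxiliary admissible.pos η_pos.le (by simpa using D_le)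
  have length_le : length P ≤ Real.exp (ω * A) :=
    (hlen.trans (pow_le_pow_left₀ (by linarith) B_le _)).trans
      (admissible.pow_sum_le_exp (hB.trans B_le) (by linarith [min_le_left ω η]))
  have length_translate_le :
      (1 + |α|) ^ (∑ i, r i) * (2 ^ (∑ i, r i) * length P) ≤ Real.exp (η * A) := by
    refine le_trans ?_
      (admissible.pow_sum_le_exp (hB.trans B_le) (by linarith [min_le_right ω η]))
    rw [mul_pow, mul_pow]
    gcongr
  have le := (admissible.mono (ω'_le.trans (min_le_left ω η))).le_of_rothLemma rothLemma hP hdeg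
    length_le length_translate_le (by simpa using hindex) log_le (by linarith) hx.abs_sub_le
  rw [hη] at le
  nlinarith [mul_le_mul_of_nonneg_left one_le_n hδ.le, mul_le_mul_of_nonneg_left hδ1 hδ.le,
    mul_le_mul_of_nonneg_left hδ1 (mul_nonneg hδ.le n.cast_nonneg)]

lemma finite_setOf_den_le_abs_sub_le (α C : ℝ) (N : ℕ) :
    {x : ℚ | x.den ≤ N ∧ |(x : ℝ) - α| ≤ C}.Finite := by
  obtain ⟨M, hM⟩ := exists_nat_ge (N * (|α| + C))
  refine Set.Finite.of_finite_image (f := fun x : ℚ => (x.num, x.den))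
    (((Set.finite_Icc (-(M : ℤ)) M).prod (Set.finite_Iic N)).subset ?_)
    fun x _ y _ h => Rat.ext (congrArg Prod.fst h) (congrArg Prod.snd h)
  rintro _ ⟨x, ⟨hden, hx⟩, rfl⟩
  refine ⟨abs_le.1 ?_, hden⟩
  have abs_x_le : |(x : ℝ)| ≤ |α| + C := by linarith [abs_sub_abs_le_abs_sub (x : ℝ) α]
  have num_eq : (x.num : ℝ) = x.den * x := mod_cast (Rat.den_mul_eq_num x).symm
  have : |(x.num : ℝ)| ≤ M := by
    rw [num_eq, abs_mul, Nat.abs_cast]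
    exact (mul_le_mul (Nat.cast_le.2 hden) abs_x_le (abs_nonneg _) N.cast_nonneg).trans hM
  exact_mod_cast this

lemma exp_neg_mul_log_den (t : ℝ) (x : ℚ) :
    Real.exp (-(t * Real.log x.den)) = ((x.den : ℝ) ^ t)⁻¹ := by
  rw [Real.rpow_def_of_pos (mod_cast x.den_pos), Real.exp_neg, mul_comm]

lemma finite_setOf_abs_sub_le_of_isIntegral {α δ : ℝ} (hα : IsIntegral ℤ α) (hδ : 0 < δ)
    (hδ1 : δ ≤ 1) : {x : ℚ | |(x : ℝ) - α| ≤ ((x.den : ℝ) ^ (2 + δ))⁻¹}.Finite := by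
  obtain ⟨n, c, L, hL⟩ := exists_forall_not_isLacunaryApprox hα hδ hδ1
  obtain ⟨L', hL'⟩ : ∃ L', ∀ x : {x : ℚ | |(x : ℝ) - α| ≤ ((x.den : ℝ) ^ (2 + δ))⁻¹},
      Real.log x.1.den < L' := by
    by_contra! unbounded
    obtain ⟨x, le_log, lacunary⟩ := exists_lacunary_of_unbounded unbounded c L n
    refine hL (fun i => x i) ⟨fun i => ?_, le_log, lacunary⟩
    rw [exp_neg_mul_log_den]
    exact (x i).2
  obtain ⟨N, hN⟩ := exists_nat_ge (Real.exp L')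
  refine (finite_setOf_den_le_abs_sub_le α 1 N).subset fun x hx => ⟨?_, hx.trans ?_⟩
  · have := (Real.log_lt_iff_lt_exp (mod_cast x.den_pos)).1 (hL' ⟨x, hx⟩)
    exact_mod_cast this.le.trans hN
  · exact inv_le_one_of_one_le₀ (Real.one_le_rpow (mod_cast x.den_pos) (by linarith))

lemma exists_le_abs_sub_of_isIntegral {α δ : ℝ} (hα : IsIntegral ℤ α) (hδ : 0 < δ) :
    ∃ C > 0, ∀ x : ℚ, (x : ℝ) ≠ α → C / (x.den : ℝ) ^ (2 + δ) ≤ |(x : ℝ) - α| := by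
  have finite := finite_setOf_abs_sub_le_of_isIntegral hα (lt_min hδ one_pos) (min_le_right _ _)
  have eventually_le : ∀ᶠ c in 𝓝[>] (0 : ℝ),
      ∀ x ∈ {x : ℚ | |(x : ℝ) - α| ≤ ((x.den : ℝ) ^ (2 + min δ 1))⁻¹},
        (x : ℝ) ≠ α → c ≤ |(x : ℝ) - α| :=
    (Filter.eventually_all_finite finite).2 fun x _ =>
      Filter.eventually_imp_distrib_left.2 fun hx =>
        (eventually_le_nhds (abs_sub_pos.2 hx)).filter_mono nhdsWithin_le_nhds
  obtain ⟨c, hcx, hc⟩ := (eventually_le.and self_mem_nhdsWithin).exists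
  replace hc : 0 < c := hc
  refine ⟨min c 1, lt_min hc one_pos, fun x hx => ?_⟩
  have one_le_den : (1 : ℝ) ≤ x.den := mod_cast x.den_pos
  by_cases hmem : |(x : ℝ) - α| ≤ ((x.den : ℝ) ^ (2 + min δ 1))⁻¹
  · calc min c 1 / (x.den : ℝ) ^ (2 + δ)
      _ ≤ min c 1 := div_le_self (by positivity) (Real.one_le_rpow one_le_den (by linarith))
      _ ≤ c := min_le_left c 1
      _ ≤ |(x : ℝ) - α| := hcx x hmem hx
  · calc min c 1 / (x.den : ℝ) ^ (2 + δ)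
      _ ≤ 1 / (x.den : ℝ) ^ (2 + min δ 1) := by gcongr <;> simp
      _ ≤ |(x : ℝ) - α| := by rw [one_div]; exact (not_le.1 hmem).le

/-- Roth's theorem. -/
theorem exists_le_abs_sub_of_isAlgebraic {α δ : ℝ} (hα : IsAlgebraic ℤ α) (hδ : 0 < δ) :
    ∃ C > 0, ∀ x : ℚ, (x : ℝ) ≠ α → C / (x.den : ℝ) ^ (2 + δ) ≤ |(x : ℝ) - α| := by
  obtain ⟨y, hy, integral⟩ := hα.exists_integral_multiple
  obtain ⟨C, hC, hCx⟩ := exists_le_abs_sub_of_isIntegral integral hδ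
  have y_ne : (y : ℝ) ≠ 0 := mod_cast hy
  refine ⟨C / |(y : ℝ)|, div_pos hC (abs_pos.2 y_ne), fun x hx => ?_⟩
  have den_le : (((y * x : ℚ).den : ℝ)) ≤ x.den :=
    mod_cast Nat.le_of_dvd x.den_pos (by simpa using Rat.mul_den_dvd y x)
  rw [div_div, mul_comm, ← div_div, div_le_iff₀ (abs_pos.2 y_ne), mul_comm |_ - α|, ← abs_mul]
  calc C / (x.den : ℝ) ^ (2 + δ)
    _ ≤ C / ((y * x : ℚ).den : ℝ) ^ (2 + δ) := by gcongr
    _ ≤ |((y * x : ℚ) : ℝ) - y • α| := hCx (y * x) (by simpa [y_ne] using hx)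
    _ = |(y : ℝ) * (x - α)| := by rw [zsmul_eq_mul, mul_sub, Rat.cast_mul, Rat.cast_intCast]

end RothTheorem

section PowerForms

lemma abs_sub_mul_max_pow_le {x y : ℝ} (hx : 0 ≤ x) (hy : 0 ≤ y) (m : ℕ) :
    |x - y| * max x y ^ m ≤ |x ^ (m + 1) - y ^ (m + 1)| := by
  wlog hyx : y ≤ x generalizing x y
  · simpa only [abs_sub_comm, max_comm] using this hy hx (not_le.1 hyx).le
  rw [max_eq_left hyx, abs_of_nonneg (sub_nonneg.2 hyx)]
  refine le_trans ?_ (le_abs_self _)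
  linarith [mul_le_mul_of_nonneg_left (pow_le_pow_left₀ hy hyx m) hy, pow_succ' x m, pow_succ' y m]

lemma exists_le_abs_sub_mul {α δ : ℝ} (hα : IsAlgebraic ℤ α) (hδ : 0 < δ) :
    ∃ C > 0, ∀ (p : ℤ) (q : ℕ), 0 < q → (p : ℝ) ≠ α * q →
      C / (q : ℝ) ^ (1 + δ) ≤ |p - α * q| := by
  obtain ⟨C, hC, hCx⟩ := exists_le_abs_sub_of_isAlgebraic hα hδ
  refine ⟨C, hC, fun p q hq hne => ?_⟩
  have q_pos : (0 : ℝ) < q := mod_cast hq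
  set x : ℚ := p / q
  have x_eq : (x : ℝ) = p / q := by simp [x]
  have den_le : (x.den : ℝ) ≤ q := by
    have : (x.den : ℤ) ∣ q := by simpa [x, Rat.divInt_eq_div] using Rat.den_dvd p q
    exact mod_cast Int.le_of_dvd (mod_cast hq) this
  calc C / (q : ℝ) ^ (1 + δ)
    _ = C / (q : ℝ) ^ (2 + δ) * q := by
        rw [show 2 + δ = 1 + δ + 1 by ring, Real.rpow_add_one q_pos.ne' (1 + δ)]
        field_simp
    _ ≤ C / (x.den : ℝ) ^ (2 + δ) * q := by gcongr
    _ ≤ |(x : ℝ) - α| * q := by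
        gcongr
        exact hCx x (by rwa [x_eq, ne_eq, div_eq_iff q_pos.ne'])
    _ = |p - α * q| := by
        rw [← abs_of_pos q_pos, ← abs_mul, sub_mul, x_eq, abs_of_pos q_pos,
          div_mul_cancel₀ _ q_pos.ne']

lemma exists_mul_max_rpow_le_abs_sub_mul {α δ : ℝ} (hα : IsAlgebraic ℤ α) (hα0 : 0 < α)
    (hδ : 0 < δ) : ∃ c > 0, ∀ p q : ℕ, 0 < p → 0 < q → (p : ℝ) ≠ α * q →
      c * max (p : ℝ) (α * q) ^ (1 - δ) ≤ |p - α * q| * (p * q) := by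
  obtain ⟨C, hC, roth⟩ := exists_le_abs_sub_mul hα hδ
  refine ⟨min (C * α ^ δ / 2) (1 / (2 * α)), by positivity, fun p q hp hq hne => ?_⟩
  set M := max (p : ℝ) (α * q)
  have one_le_p : (1 : ℝ) ≤ p := mod_cast hp
  have q_pos : (0 : ℝ) < q := mod_cast hq
  have one_le_M : 1 ≤ M := one_le_p.trans (le_max_left _ _)
  have M_pos : 0 < M := zero_lt_one.trans_le one_le_M
  rcases le_or_gt M (2 * p) with large | small
  · have abs_sub_ge : C / (q : ℝ) ^ (1 + δ) ≤ |p - α * q| := mod_cast roth p q hq (mod_cast hne)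
    have rpow_le : (q : ℝ) ^ δ ≤ M ^ δ / α ^ δ := by
      rw [← Real.div_rpow M_pos.le hα0.le]
      gcongr
      rw [le_div_iff₀' hα0]
      exact le_max_right _ _
    calc min (C * α ^ δ / 2) (1 / (2 * α)) * M ^ (1 - δ)
      _ ≤ C * α ^ δ / 2 * M ^ (1 - δ) := by gcongr; exact min_le_left _ _
      _ = C / (M ^ δ / α ^ δ) * (M / 2) := by
          rw [Real.rpow_sub M_pos, Real.rpow_one]; field_simp
      _ ≤ C / (q : ℝ) ^ δ * p := by gcongr; linarith
      _ = C / (q : ℝ) ^ (1 + δ) * (p * q) := by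
          rw [Real.rpow_add q_pos, Real.rpow_one]; field_simp
      _ ≤ |p - α * q| * (p * q) := by gcongr
  · have M_eq : M = α * q := (max_choice _ _).resolve_left fun h => by linarith
    have abs_sub_ge : M / 2 ≤ |p - α * q| := by
      rw [← M_eq, abs_sub_comm]
      linarith [le_abs_self (M - p)]
    calc min (C * α ^ δ / 2) (1 / (2 * α)) * M ^ (1 - δ)
      _ ≤ 1 / (2 * α) * M ^ (2 : ℝ) := by
          gcongr
          · exact min_le_right _ _
          · linarith
      _ = M / 2 * (1 * q) := by rw [Real.rpow_two, M_eq]; field_simp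
      _ ≤ |p - α * q| * (p * q) := by gcongr

lemma exists_mul_max_rpow_le_abs_pow_sub_pow {α δ : ℝ} (hα : IsAlgebraic ℤ α) (hα0 : 0 < α)
    (hδ : 0 < δ) {n : ℕ} (hn : n ≠ 0) : ∃ c > 0, ∀ p q : ℕ, 0 < p → 0 < q → (p : ℝ) ≠ α * q →
      c * max (p : ℝ) (α * q) ^ (n - δ) ≤ |(p : ℝ) ^ n - (α * q) ^ n| * (p * q) := by
  obtain ⟨m, rfl⟩ := Nat.exists_eq_succ_of_ne_zero hn
  obtain ⟨c, hc, hcpq⟩ := exists_mul_max_rpow_le_abs_sub_mul hα hα0 hδ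
  refine ⟨c, hc, fun p q hp hq hne => ?_⟩
  set M := max (p : ℝ) (α * q)
  have M_pos : 0 < M := lt_max_of_lt_left (mod_cast hp)
  calc c * M ^ ((m + 1 : ℕ) - δ)
    _ = c * M ^ (1 - δ) * M ^ m := by
        rw [Nat.cast_succ, add_sub_assoc, add_comm, Real.rpow_add M_pos, Real.rpow_natCast,
          mul_assoc]
    _ ≤ |p - α * q| * (p * q) * M ^ m :=
        mul_le_mul_of_nonneg_right (hcpq p q hp hq hne) (pow_pos M_pos m).le
    _ = |p - α * q| * M ^ m * (p * q) := by ring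
    _ ≤ |(p : ℝ) ^ (m + 1) - (α * q) ^ (m + 1)| * (p * q) :=
        mul_le_mul_of_nonneg_right
          (abs_sub_mul_max_pow_le p.cast_nonneg (by positivity) m) (by positivity)

end PowerForms

end Roth

theorem wneabc_cbrt_two_general {n a : ℕ} (hn : n ≠ 0) (ha : 0 < a) :
    ∀ ε > (0 : ℝ), ∃ K > (0 : ℝ), ∀ p q : ℕ, 0 < p → 0 < q →
      ∀ d : ℤ, d = a * (q : ℤ) ^ n - (p : ℤ) ^ n → d ≠ 0 →
      max ((p : ℝ) ^ n) (a * (q : ℝ) ^ n) <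
        K * (|(d : ℝ)| * (p : ℝ) * (q : ℝ) * a) ^ ((1 : ℝ) + ε) := by
  intro ε hε
  set α : ℝ := (a : ℝ) ^ ((n : ℝ)⁻¹)
  have α_pos : 0 < α := Real.rpow_pos_of_pos (mod_cast ha) _
  have α_pow : α ^ n = a := Real.rpow_inv_natCast_pow a.cast_nonneg hn
  have algebraic : IsAlgebraic ℤ α :=
    .of_pow (Nat.pos_of_ne_zero hn) (α_pow ▸ isAlgebraic_natCast a)
  obtain ⟨δ, hδ, exponent⟩ : ∃ δ > 0, (n - δ) * (1 + ε) = n :=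
    ⟨n * ε / (1 + ε), by positivity, by field_simp; ring⟩
  obtain ⟨c, hc, hcpq⟩ :=
    Roth.exists_mul_max_rpow_le_abs_pow_sub_pow algebraic α_pos hδ hn
  refine ⟨2 / c ^ (1 + ε), by positivity, fun p q hp hq d hd hd0 => ?_⟩
  set M := max (p : ℝ) (α * q)
  have M_pos : 0 < M := lt_max_of_lt_left (mod_cast hp)
  have d_eq : (d : ℝ) = (α * q) ^ n - p ^ n := by rw [hd, mul_pow, α_pow]; push_cast; rfl
  have ne : (p : ℝ) ≠ α * q := fun h => hd0 (by rw [← h, sub_self] at d_eq; exact_mod_cast d_eq)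
  have le_radical : c * M ^ (n - δ) ≤ |(d : ℝ)| * p * q * a := by
    rw [d_eq, abs_sub_comm, mul_assoc |_|]
    exact (hcpq p q hp hq ne).trans (le_mul_of_one_le_right (by positivity) (mod_cast ha))
  calc max ((p : ℝ) ^ n) (a * q ^ n)
    _ = M ^ n := by
        rw [← α_pow, ← mul_pow]
        have p_nonneg : (p : ℝ) ∈ {x : ℝ | 0 ≤ x} := by simp
        have αq_nonneg : α * q ∈ {x : ℝ | 0 ≤ x} := Set.mem_ofPred.2 (by positivity)
        exact (pow_left_monotoneOn.map_max p_nonneg αq_nonneg).symm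
    _ < 2 * M ^ n := lt_two_mul_self (pow_pos M_pos _)
    _ = 2 / c ^ (1 + ε) * (c * M ^ (n - δ)) ^ (1 + ε) := by
        rw [Real.mul_rpow hc.le (by positivity), ← Real.rpow_mul M_pos.le, exponent,
          Real.rpow_natCast]
        field_simp
    _ ≤ 2 / c ^ (1 + ε) * (|(d : ℝ)| * p * q * a) ^ (1 + ε) := by gcongr

/-- WNEABC for the resulting equations of ∛2: for every ε > 0 there is K_ε > 0 with
max(p³, 2q³) < K_ε·(|d|·p·q·2)^{1+ε} for all convergents p/q of ∛2 with d ≠ 0. -/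
theorem wneabc_cbrt_two :
    ∀ ε > (0 : ℝ), ∃ K > (0 : ℝ), ∀ p q : ℕ, 0 < p → 0 < q → Nat.Coprime p q →
      |(2 : ℝ) ^ ((1 : ℝ) / 3) - (p : ℝ) / (q : ℝ)| < 1 / (q : ℝ) ^ 2 →
      ∀ d : ℤ, d = 2 * (q : ℤ) ^ 3 - (p : ℤ) ^ 3 → d ≠ 0 →
      max ((p : ℝ) ^ 3) (2 * (q : ℝ) ^ 3) <
        K * (|(d : ℝ)| * (p : ℝ) * (q : ℝ) * 2) ^ ((1 : ℝ) + ε) := by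
  intro ε hε
  obtain ⟨K, hK, hKpq⟩ := wneabc_cbrt_two_general three_ne_zero two_pos ε hε
  exact ⟨K, hK, fun p q hp hq _ _ => hKpq p q hp hq⟩
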